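/- arXiv:1503.08544 — 3 statements merged into one kernel-verified Lean document; each statement's English description precedes it below -/
import Mathlib

section
/- Let f : ℝ² → ℝ² be a C^∞ map with f(0)=0 which has corank one at 0, let λ be its Jacobian determinant, and let η be any null vector field for f. Then for every integer r ≥ 4, the r-jet j^r f(0) is A^r-equivalent to the r-jet at 0 of the map (x,y) ↦ (x, xy² + y^r) if and only if dλ(0) = 0, det H_λ(0) < 0, (η^i λ)(0) = 0 for all 2 ≤ i ≤ r−2, and (η^{r−1} λ)(0) ≠ 0. -/
open Filter Topology

noncomputable section

/-- Directional derivative of a scalar function. -/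
def dop (v : ℝ × ℝ) (g : ℝ × ℝ → ℝ) : ℝ × ℝ → ℝ :=
  fun p => fderiv ℝ g p v

/-- Partial derivative operator in the first coordinate. -/
def pdx : (ℝ × ℝ → ℝ) → ℝ × ℝ → ℝ := dop (1, 0)

/-- Partial derivative operator in the second coordinate. -/
def pdy : (ℝ × ℝ → ℝ) → ℝ × ℝ → ℝ := dop (0, 1)

/-- Taylor coefficient `a_{ij} = ∂_x^i ∂_y^j g(0,0) / (i! j!)` of `g` at the origin. -/
def tcoeff (g : ℝ × ℝ → ℝ) (i j : ℕ) : ℝ :=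
  (pdx^[i] (pdy^[j] g)) 0 / (Nat.factorial i * Nat.factorial j)

/-- The Jacobian determinant `λ_f` of a map `f : ℝ² → ℝ²`. -/
def jacDet (f : ℝ × ℝ → ℝ × ℝ) (p : ℝ × ℝ) : ℝ :=
  (fderiv ℝ f p (1, 0)).1 * (fderiv ℝ f p (0, 1)).2 -
    (fderiv ℝ f p (1, 0)).2 * (fderiv ℝ f p (0, 1)).1

/-- `f` has corank one at `0` : the derivative of `f` at `0` has rank one. -/
def CorankOne (f : ℝ × ℝ → ℝ × ℝ) : Prop :=
  LinearMap.rank ((fderiv ℝ f 0).toLinearMap) = 1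

/-- `η` is a null vector field for `f` near `0`. -/
def IsNullVF (f η : ℝ × ℝ → ℝ × ℝ) : Prop :=
  η 0 ≠ 0 ∧ ∃ U ∈ 𝓝 (0 : ℝ × ℝ),
    ContDiffOn ℝ (⊤ : ℕ∞) η U ∧ ∀ p ∈ U, jacDet f p = 0 → fderiv ℝ f p (η p) = 0

/-- The derivative `(ηg)(p) = Dg(p)(η(p))` of `g` along the vector field `η`. -/
def etaD (η : ℝ × ℝ → ℝ × ℝ) (g : ℝ × ℝ → ℝ) : ℝ × ℝ → ℝ :=
  fun p => fderiv ℝ g p (η p)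

/-- The iterated derivative `η^k g` along the vector field `η`. -/
def etaIter (η : ℝ × ℝ → ℝ × ℝ) : ℕ → (ℝ × ℝ → ℝ) → ℝ × ℝ → ℝ
  | 0, g => g
  | k + 1, g => etaD η (etaIter η k g)

/-- The Hessian matrix of second partial derivatives of `g` at `0`. -/
def hess (g : ℝ × ℝ → ℝ) : Matrix (Fin 2) (Fin 2) ℝ :=
  !![pdx (pdx g) 0, pdx (pdy g) 0; pdy (pdx g) 0, pdy (pdy g) 0]

/-- `A^r`-equivalence of the `r`-jets at `0` of two map-germs `(ℝ²,0) → (ℝ²,0)`. -/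
def JetEquiv (r : ℕ) (f g : ℝ × ℝ → ℝ × ℝ) : Prop :=
  ∃ φ ψ : ℝ × ℝ → ℝ × ℝ,
    ContDiff ℝ (⊤ : ℕ∞) φ ∧ ContDiff ℝ (⊤ : ℕ∞) ψ ∧ φ 0 = 0 ∧ ψ 0 = 0 ∧
    Function.Bijective (⇑(fderiv ℝ φ 0)) ∧ Function.Bijective (⇑(fderiv ℝ ψ 0)) ∧
    ∀ i ≤ r, iteratedFDeriv ℝ i (ψ ∘ f ∘ φ) 0 = iteratedFDeriv ℝ i g 0

/-- `A`-equivalence of two map-germs `(ℝ²,0) → (ℝ²,0)`. -/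
def AEquiv (f g : ℝ × ℝ → ℝ × ℝ) : Prop :=
  ∃ φ ψ : ℝ × ℝ → ℝ × ℝ,
    ContDiff ℝ (⊤ : ℕ∞) φ ∧ ContDiff ℝ (⊤ : ℕ∞) ψ ∧ φ 0 = 0 ∧ ψ 0 = 0 ∧
    Function.Bijective (⇑(fderiv ℝ φ 0)) ∧ Function.Bijective (⇑(fderiv ℝ ψ 0)) ∧
    ∀ᶠ p in 𝓝 (0 : ℝ × ℝ), ψ (f (φ p)) = g p

/-- `f` has the form `(x, g(x,y))` where `g` is `C^∞` and the Taylor coefficients of `g`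
of total degree `< N` at the origin are prescribed by `P`. -/
def HasForm (f : ℝ × ℝ → ℝ × ℝ) (g : ℝ × ℝ → ℝ) (N : ℕ) (P : ℕ → ℕ → ℝ) : Prop :=
  ContDiff ℝ (⊤ : ℕ∞) g ∧ (∀ p, f p = (p.1, g p)) ∧
    ∀ i j, i + j < N → tcoeff g i j = P i j

set_option linter.unusedVariables false
set_option linter.unusedSimpArgs false
open Asymptotics

/-- `u` vanishes to order `N` at the origin. -/
def OO {E F : Type*} [NormedAddCommGroup E] [NormedAddCommGroup F] (N : ℕ) (u : E → F) : Prop :=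
  u =O[𝓝 (0 : E)] fun p => ‖p‖ ^ N

section OOsec
variable {E F G : Type*} [NormedAddCommGroup E] [NormedAddCommGroup F] [NormedAddCommGroup G]

theorem OO.add {N : ℕ} {u v : E → F} (hu : OO N u) (hv : OO N v) : OO N (fun p => u p + v p) :=
  IsBigO.add hu hv

theorem OO.sub {N : ℕ} {u v : E → F} (hu : OO N u) (hv : OO N v) : OO N (fun p => u p - v p) :=
  IsBigO.sub hu hv

theorem OO.neg {N : ℕ} {u : E → F} (hu : OO N u) : OO N (fun p => - u p) :=
  IsBigO.neg_left hu

theorem OO.sum {ι : Type*} {N : ℕ} {s : Finset ι} {u : ι → E → F} (hu : ∀ i ∈ s, OO N (u i)) :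
    OO N (fun p => ∑ i ∈ s, u i p) :=
  IsBigO.fun_sum hu

theorem OO.congr {N : ℕ} {u v : E → F} (hu : OO N u) (h : ∀ p, v p = u p) : OO N v := by
  have : v = u := funext h
  rwa [this]

theorem OO.mul {N M : ℕ} {u v : E → ℝ} (hu : OO N u) (hv : OO M v) :
    OO (N + M) (fun p => u p * v p) :=
  (IsBigO.mul hu hv).congr_right fun p => (pow_add _ _ _).symm

theorem OO.mono {N M : ℕ} {u : E → F} (hu : OO N u) (h : M ≤ N) : OO M u := by
  refine IsBigO.trans hu ?_
  refine IsBigO.of_bound 1 ?_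
  filter_upwards [Metric.ball_mem_nhds (0 : E) one_pos] with p hp
  have hp' : ‖p‖ ≤ 1 := by simpa using (mem_ball_zero_iff.1 hp).le
  rw [one_mul, norm_pow, norm_pow, norm_norm]
  exact pow_le_pow_of_le_one (norm_nonneg _) hp' h

theorem OO.of_continuousAt {u : E → F} (hu : ContinuousAt u 0) : OO 0 u := by
  have : u =O[𝓝 (0 : E)] (fun _ => (1 : ℝ)) := hu.isBigO_one ℝ
  simpa [OO] using this

theorem OO.mul_left {N : ℕ} {u v : E → ℝ} (hu : ContinuousAt u 0) (hv : OO N v) :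
    OO N (fun p => u p * v p) := by
  simpa using (OO.of_continuousAt hu).mul hv

theorem OO.const_mul {N : ℕ} {v : E → ℝ} (c : ℝ) (hv : OO N v) :
    OO N (fun p => c * v p) := OO.mul_left continuousAt_const hv

theorem OO.pow {N : ℕ} {u : E → ℝ} (hu : OO N u) (k : ℕ) : OO (N * k) (fun p => u p ^ k) := by
  refine (IsBigO.pow hu k).congr_right fun p => ?_
  rw [pow_mul]

theorem OO.pow1 {u : E → ℝ} (hu : OO 1 u) (k : ℕ) : OO k (fun p => u p ^ k) := by
  simpa using hu.pow k

theorem OO.zero_at {N : ℕ} {u : E → F} (hu : OO (N + 1) u) : u 0 = 0 := by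
  have := hu.eq_zero_imp
  exact this.self_of_nhds (by simp)

theorem OO.tendsto {N : ℕ} {u : E → F} (hu : OO (N + 1) u) : Tendsto u (𝓝 0) (𝓝 0) := by
  refine hu.trans_tendsto ?_
  have : Continuous fun p : E => ‖p‖ ^ (N + 1) := by fun_prop
  simpa using this.tendsto 0

theorem OO.comp {N : ℕ} {u : F → G} {φ : E → F} (hu : OO N u) (hφ : OO 1 φ) :
    OO N (fun p => u (φ p)) := by
  have h1 : (fun p => u (φ p)) =O[𝓝 (0 : E)] fun p => ‖φ p‖ ^ N :=
    IsBigO.comp_tendsto hu (OO.tendsto (N := 0) hφ)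
  refine h1.trans ?_
  have h2 : φ =O[𝓝 (0 : E)] fun p => ‖p‖ := by simpa [OO] using hφ
  exact h2.norm_left.pow N

theorem OO.of_differentiableAt [NormedSpace ℝ E] [NormedSpace ℝ F] {u : E → F}
    (hu : DifferentiableAt ℝ u 0) (h0 : u 0 = 0) : OO 1 u := by
  have := hu.isBigO_sub
  simp only [h0, sub_zero] at this
  simpa [OO] using this.norm_right

theorem OO.of_le {N : ℕ} {u : E → F} {v : E → G} (hv : OO N v) (h : ∀ p, ‖u p‖ ≤ ‖v p‖) :
    OO N u :=
  IsBigO.trans (IsBigO.of_bound 1 (Eventually.of_forall fun p => by simpa using h p)) hv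

theorem OO.fst {N : ℕ} {u : E → F × G} (hu : OO N u) : OO N (fun p => (u p).1) :=
  hu.of_le fun p => norm_fst_le _

theorem OO.snd {N : ℕ} {u : E → F × G} (hu : OO N u) : OO N (fun p => (u p).2) :=
  hu.of_le fun p => norm_snd_le _

theorem OO.prodMk {N : ℕ} {u : E → F} {v : E → G} (hu : OO N u) (hv : OO N v) :
    OO N (fun p => (u p, v p)) := IsBigO.prod_left hu hv

/-- Differences through a `C^1` map. -/
theorem OO.comp_sub [NormedSpace ℝ F] [NormedSpace ℝ G] {N : ℕ} {ψ : F → G} {u v : E → F}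
    (hψ : ContDiffAt ℝ 1 ψ 0) (hu : Tendsto u (𝓝 0) (𝓝 0)) (hv : Tendsto v (𝓝 0) (𝓝 0))
    (h : OO N (fun p => u p - v p)) : OO N (fun p => ψ (u p) - ψ (v p)) := by
  obtain ⟨K, t, ht, hK⟩ := hψ.exists_lipschitzOnWith
  refine IsBigO.trans (IsBigO.of_bound K ?_) h
  filter_upwards [hu ht, hv ht] with p h1 h2
  simpa [dist_eq_norm] using hK.dist_le_mul _ h1 _ h2

/-- Integration of order. -/
theorem OO.of_fderiv [NormedSpace ℝ E] [NormedSpace ℝ F] {N : ℕ} {u : E → F} (h0 : u 0 = 0)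
    (hd : ∀ᶠ p in 𝓝 (0 : E), DifferentiableAt ℝ u p)
    (h : OO N (fun p => fderiv ℝ u p)) : OO (N + 1) u := by
  obtain ⟨C, hC⟩ := h.bound
  obtain ⟨ε, hε, hball⟩ := Metric.eventually_nhds_iff_ball.1 (hd.and hC)
  refine IsBigO.of_bound C ?_
  filter_upwards [Metric.ball_mem_nhds (0 : E) hε] with p hp
  have hp' : ‖p‖ < ε := by simpa using hp
  have hsub : ∀ q ∈ Metric.closedBall (0 : E) ‖p‖, q ∈ Metric.ball (0 : E) ε := fun q hq => by
    have : ‖q‖ ≤ ‖p‖ := by simpa using hq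
    simpa using lt_of_le_of_lt this hp'
  have hC0 : 0 ≤ C * ‖p‖ ^ N := by
    have := (hball p hp).2
    rw [norm_pow, norm_norm] at this
    exact (norm_nonneg _).trans this
  have key := (convex_closedBall (0 : E) ‖p‖).norm_image_sub_le_of_norm_fderiv_le (𝕜 := ℝ)
    (f := u) (C := C * ‖p‖ ^ N) (fun q hq => (hball q (hsub q hq)).1)
    (fun q hq => by
      have h1 := (hball q (hsub q hq)).2
      have h2 : ‖q‖ ≤ ‖p‖ := by simpa using hq
      rw [norm_pow, norm_norm] at h1
      rcases eq_or_ne q 0 with rfl | hq0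
      · rcases Nat.eq_zero_or_pos N with rfl | hN
        · simpa using h1
        · rw [norm_zero, zero_pow hN.ne', mul_zero] at h1
          exact h1.trans hC0
      · have hCn : 0 ≤ C := by
          have : 0 ≤ C * ‖q‖ ^ N := (norm_nonneg _).trans h1
          have hpos : 0 < ‖q‖ ^ N := pow_pos (norm_pos_iff.2 hq0) N
          by_contra hcon
          have := mul_neg_of_neg_of_pos (not_le.1 hcon) hpos
          linarith
        refine h1.trans ?_
        gcongr)
    (x := 0) (y := p) (by simp) (by simp)
  simp only [h0, sub_zero] at key
  rw [norm_pow, norm_norm, pow_succ, ← mul_assoc]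
  exact key

end OOsec

/-- Smooth functions. -/
abbrev Sm {E F : Type*} [NormedAddCommGroup E] [NormedAddCommGroup F] [NormedSpace ℝ E]
  [NormedSpace ℝ F] (u : E → F) : Prop := ContDiff ℝ (⊤ : ℕ∞) u

theorem Sm.dop {v : ℝ × ℝ} {u : ℝ × ℝ → ℝ} (hu : Sm u) : Sm (dop v u) := by
  have h1 : ContDiff ℝ (⊤ : ℕ∞) (fderiv ℝ u) := hu.fderiv_right (by simp)
  exact h1.clm_apply contDiff_const

theorem Sm.pdx {u : ℝ × ℝ → ℝ} (hu : Sm u) : Sm (pdx u) := hu.dop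
theorem Sm.pdy {u : ℝ × ℝ → ℝ} (hu : Sm u) : Sm (pdy u) := hu.dop

theorem Sm.pdx_iter {u : ℝ × ℝ → ℝ} (hu : Sm u) (n : ℕ) : Sm (_root_.pdx^[n] u) := by
  induction n with
  | zero => exact hu
  | succ n ih => rw [Function.iterate_succ_apply']; exact ih.pdx

theorem Sm.pdy_iter {u : ℝ × ℝ → ℝ} (hu : Sm u) (n : ℕ) : Sm (_root_.pdy^[n] u) := by
  induction n with
  | zero => exact hu
  | succ n ih => rw [Function.iterate_succ_apply']; exact ih.pdy

theorem Sm.diff {E F : Type*} [NormedAddCommGroup E] [NormedAddCommGroup F] [NormedSpace ℝ E]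
    [NormedSpace ℝ F] {u : E → F} (hu : Sm u) : Differentiable ℝ u :=
  hu.differentiable (by simp)

theorem Sm.one {E F : Type*} [NormedAddCommGroup E] [NormedAddCommGroup F] [NormedSpace ℝ E]
    [NormedSpace ℝ F] {u : E → F} (hu : Sm u) (p : E) : ContDiffAt ℝ 1 u p :=
  hu.contDiffAt.of_le (by exact_mod_cast le_top)

theorem dop_comm {u : ℝ × ℝ → ℝ} (hu : Sm u) (v w : ℝ × ℝ) :
    dop v (dop w u) = dop w (dop v u) := by
  funext p
  have h1 : Sm (fderiv ℝ u) := hu.fderiv_right (by simp)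
  have hs : IsSymmSndFDerivAt ℝ u p :=
    hu.contDiffAt.isSymmSndFDerivAt (by simpa using (WithTop.coe_le_coe.2 (le_top : (2 : ℕ∞) ≤ ⊤)))
  have e : ∀ a b : ℝ × ℝ, dop a (dop b u) p = fderiv ℝ (fderiv ℝ u) p a b := by
    intro a b
    have : HasFDerivAt (fun q => fderiv ℝ u q b)
        ((ContinuousLinearMap.apply ℝ ℝ b).comp (fderiv ℝ (fderiv ℝ u) p)) p :=
      (ContinuousLinearMap.apply ℝ ℝ b).hasFDerivAt.comp p (h1.diff p).hasFDerivAt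
    show fderiv ℝ (fun q => fderiv ℝ u q b) p a = _
    rw [this.fderiv]; rfl
  rw [e, e, hs.eq]

theorem pdx_pdy {u : ℝ × ℝ → ℝ} (hu : Sm u) : pdx (pdy u) = pdy (pdx u) := dop_comm hu _ _

theorem pdy_iter_pdx {u : ℝ × ℝ → ℝ} (hu : Sm u) (n : ℕ) :
    pdy^[n] (pdx u) = pdx (pdy^[n] u) := by
  induction n with
  | zero => rfl
  | succ n ih =>
    rw [Function.iterate_succ_apply', ih, Function.iterate_succ_apply', pdx_pdy (hu.pdy_iter n)]

/-- Mixed partial derivative at the origin. -/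
def DD (i j : ℕ) (u : ℝ × ℝ → ℝ) : ℝ := (pdx^[i] (pdy^[j] u)) 0

theorem DD_pdx {u : ℝ × ℝ → ℝ} (hu : Sm u) (i j : ℕ) : DD i j (pdx u) = DD (i + 1) j u := by
  unfold DD; rw [pdy_iter_pdx hu, Function.iterate_succ_apply]

theorem DD_pdy {u : ℝ × ℝ → ℝ} (i j : ℕ) : DD i j (pdy u) = DD i (j + 1) u := by
  unfold DD; rw [Function.iterate_succ_apply]

theorem fderiv_eq_pd (u : ℝ × ℝ → ℝ) (p : ℝ × ℝ) :
    fderiv ℝ u p = pdx u p • ContinuousLinearMap.fst ℝ ℝ ℝ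
      + pdy u p • ContinuousLinearMap.snd ℝ ℝ ℝ := by
  refine ContinuousLinearMap.ext fun v => ?_
  have : v = v.1 • ((1 : ℝ), (0 : ℝ)) + v.2 • ((0 : ℝ), (1 : ℝ)) := by
    ext <;> simp
  conv_lhs => rw [this]
  rw [map_add, map_smul, map_smul]
  simp [pdx, pdy, dop, mul_comm]

theorem OO.of_pd {N : ℕ} {u : ℝ × ℝ → ℝ} (hu : Sm u) (h0 : u 0 = 0) (hx : OO N (pdx u))
    (hy : OO N (pdy u)) : OO (N + 1) u := by
  refine OO.of_fderiv h0 (Eventually.of_forall fun p => hu.diff p) ?_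
  have h1 : OO N (fun p => pdx u p • ContinuousLinearMap.fst ℝ ℝ ℝ) :=
    IsBigO.trans (IsBigO.of_bound ‖ContinuousLinearMap.fst ℝ ℝ ℝ‖
      (Eventually.of_forall fun p => by rw [norm_smul, mul_comm])) hx
  have h2 : OO N (fun p => pdy u p • ContinuousLinearMap.snd ℝ ℝ ℝ) :=
    IsBigO.trans (IsBigO.of_bound ‖ContinuousLinearMap.snd ℝ ℝ ℝ‖
      (Eventually.of_forall fun p => by rw [norm_smul, mul_comm])) hy
  exact (h1.add h2).congr fun p => fderiv_eq_pd u p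

theorem OO.of_DD {N : ℕ} : ∀ {u : ℝ × ℝ → ℝ}, Sm u → (∀ i j, i + j < N → DD i j u = 0) →
    OO N u := by
  induction N with
  | zero => intro u hu _; exact OO.of_continuousAt hu.continuous.continuousAt
  | succ N ih =>
    intro u hu h
    refine OO.of_pd hu (h 0 0 (by omega)) (ih hu.pdx fun i j hij => ?_)
      (ih hu.pdy fun i j hij => ?_)
    · rw [DD_pdx hu]; exact h _ _ (by omega)
    · rw [DD_pdy]; exact h _ _ (by omega)

theorem pdx_add {u v : ℝ × ℝ → ℝ} (hu : Sm u) (hv : Sm v) :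
    pdx (fun p => u p + v p) = fun p => pdx u p + pdx v p := by
  funext p
  simp only [pdx, dop]
  rw [fderiv_fun_add (hu.diff p) (hv.diff p)]; rfl

theorem pdy_add {u v : ℝ × ℝ → ℝ} (hu : Sm u) (hv : Sm v) :
    pdy (fun p => u p + v p) = fun p => pdy u p + pdy v p := by
  funext p
  simp only [pdy, dop]
  rw [fderiv_fun_add (hu.diff p) (hv.diff p)]; rfl

theorem pdx_iter_add {u v : ℝ × ℝ → ℝ} (hu : Sm u) (hv : Sm v) (n : ℕ) :
    pdx^[n] (fun p => u p + v p) = fun p => pdx^[n] u p + pdx^[n] v p := by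
  induction n with
  | zero => rfl
  | succ n ih =>
    simp only [Function.iterate_succ_apply', ih]
    exact pdx_add (hu.pdx_iter n) (hv.pdx_iter n)

theorem pdy_iter_add {u v : ℝ × ℝ → ℝ} (hu : Sm u) (hv : Sm v) (n : ℕ) :
    pdy^[n] (fun p => u p + v p) = fun p => pdy^[n] u p + pdy^[n] v p := by
  induction n with
  | zero => rfl
  | succ n ih =>
    simp only [Function.iterate_succ_apply', ih]
    exact pdy_add (hu.pdy_iter n) (hv.pdy_iter n)

theorem DD_add {u v : ℝ × ℝ → ℝ} (hu : Sm u) (hv : Sm v) (i j : ℕ) :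
    DD i j (fun p => u p + v p) = DD i j u + DD i j v := by
  unfold DD
  rw [pdy_iter_add hu hv, pdx_iter_add (hu.pdy_iter j) (hv.pdy_iter j)]

theorem DD_zero (i j : ℕ) : DD i j (fun _ => 0) = 0 := by
  have hx : pdx (fun _ => (0 : ℝ)) = fun _ => 0 := by
    funext p; simp [pdx, dop]
  have hy : pdy (fun _ => (0 : ℝ)) = fun _ => 0 := by
    funext p; simp [pdy, dop]
  unfold DD
  rw [Function.iterate_fixed hy, Function.iterate_fixed hx]

theorem DD_sum {ι : Type*} (s : Finset ι) {u : ι → ℝ × ℝ → ℝ} (hu : ∀ k, Sm (u k)) (i j : ℕ) :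
    DD i j (fun p => ∑ k ∈ s, u k p) = ∑ k ∈ s, DD i j (u k) := by
  classical
  induction s using Finset.induction_on with
  | empty => simpa using DD_zero i j
  | insert a s ha ih =>
    simp only [Finset.sum_insert ha]
    rw [DD_add (hu a) (ContDiff.sum fun k _ => hu k), ih]

/-- monomials -/
def mnm (c : ℝ) (a b : ℕ) : ℝ × ℝ → ℝ := fun p => c * (p.1 ^ a * p.2 ^ b)

theorem mnm_sm (c : ℝ) (a b : ℕ) : Sm (mnm c a b) := by
  unfold mnm Sm; fun_prop

theorem pdx_mnm (c : ℝ) (a b : ℕ) : pdx (mnm c a b) = mnm (c * a) (a - 1) b := by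
  funext p
  have h1 : HasFDerivAt (fun q : ℝ × ℝ => q.1) (ContinuousLinearMap.fst ℝ ℝ ℝ) p := hasFDerivAt_fst
  have h2 : HasFDerivAt (fun q : ℝ × ℝ => q.2) (ContinuousLinearMap.snd ℝ ℝ ℝ) p := hasFDerivAt_snd
  have := ((h1.pow a).mul (h2.pow b)).const_mul c
  simp only [pdx, dop]
  unfold mnm
  erw [this.fderiv]
  simp
  ring

theorem pdy_mnm (c : ℝ) (a b : ℕ) : pdy (mnm c a b) = mnm (c * b) a (b - 1) := by
  funext p
  have h1 : HasFDerivAt (fun q : ℝ × ℝ => q.1) (ContinuousLinearMap.fst ℝ ℝ ℝ) p := hasFDerivAt_fst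
  have h2 : HasFDerivAt (fun q : ℝ × ℝ => q.2) (ContinuousLinearMap.snd ℝ ℝ ℝ) p := hasFDerivAt_snd
  have := ((h1.pow a).mul (h2.pow b)).const_mul c
  simp only [pdy, dop]
  unfold mnm
  erw [this.fderiv]
  simp
  ring

theorem pdx_iter_mnm (c : ℝ) (a b n : ℕ) :
    pdx^[n] (mnm c a b) = mnm (c * a.descFactorial n) (a - n) b := by
  induction n with
  | zero => simp
  | succ n ih =>
    rw [Function.iterate_succ_apply', ih, pdx_mnm, Nat.descFactorial_succ]
    push_cast
    rw [Nat.sub_sub]; congr 1; ring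

theorem pdy_iter_mnm (c : ℝ) (a b n : ℕ) :
    pdy^[n] (mnm c a b) = mnm (c * b.descFactorial n) a (b - n) := by
  induction n with
  | zero => simp
  | succ n ih =>
    rw [Function.iterate_succ_apply', ih, pdy_mnm, Nat.descFactorial_succ]
    push_cast
    rw [Nat.sub_sub]; congr 1; ring

theorem DD_mnm (c : ℝ) (a b i j : ℕ) : DD i j (mnm c a b) =
    if a = i ∧ b = j then c * (i.factorial * j.factorial) else 0 := by
  unfold DD
  rw [pdy_iter_mnm, pdx_iter_mnm]
  have key : ∀ m n : ℕ, ((m.descFactorial n : ℕ) : ℝ) * (0 : ℝ) ^ (m - n) =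
      if m = n then (n.factorial : ℝ) else 0 := by
    intro m n
    rcases lt_trichotomy m n with h | h | h
    · rw [Nat.descFactorial_of_lt h, if_neg h.ne]; simp
    · subst h; simp [Nat.descFactorial_self]
    · rw [zero_pow (by omega), if_neg h.ne']; simp
  simp only [mnm, Prod.fst_zero, Prod.snd_zero]
  have : c * (b.descFactorial j : ℝ) * (a.descFactorial i : ℝ) * (0 ^ (a - i) * 0 ^ (b - j)) =
    c * (((a.descFactorial i : ℕ) : ℝ) * 0 ^ (a - i)) *
      (((b.descFactorial j : ℕ) : ℝ) * 0 ^ (b - j)) := by ring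
  rw [this, key, key]
  by_cases h1 : a = i <;> by_cases h2 : b = j <;> simp [h1, h2]
  ring

/-- Box Taylor polynomial. -/
def box (N : ℕ) (a : ℕ → ℕ → ℝ) : ℝ × ℝ → ℝ :=
  fun p => ∑ i ∈ Finset.range N, ∑ j ∈ Finset.range N, a i j * (p.1 ^ i * p.2 ^ j)

theorem box_sm (N : ℕ) (a : ℕ → ℕ → ℝ) : Sm (box N a) := by
  unfold box Sm; fun_prop

theorem DD_box (N : ℕ) (a : ℕ → ℕ → ℝ) (i j : ℕ) (hi : i < N) (hj : j < N) :
    DD i j (box N a) = a i j * (i.factorial * j.factorial) := by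
  have h1 := DD_sum (Finset.range N)
    (u := fun k p => ∑ l ∈ Finset.range N, mnm (a k l) k l p)
    (fun k => ContDiff.sum fun l _ => mnm_sm _ _ _) i j
  have h0 : DD i j (box N a) = _ := h1
  rw [h0]
  have h2 : ∀ k, DD i j (fun p => ∑ l ∈ Finset.range N, mnm (a k l) k l p) =
      ∑ l ∈ Finset.range N, DD i j (mnm (a k l) k l) := fun k =>
    DD_sum _ (fun l => mnm_sm _ _ _) i j
  simp only [h2, DD_mnm]
  rw [Finset.sum_eq_single i, Finset.sum_eq_single j]
  · simp
  · intro b _ hb; simp [hb]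
  · intro h; exact absurd (Finset.mem_range.2 hj) h
  · intro b _ hb; simp [hb]
  · intro h; exact absurd (Finset.mem_range.2 hi) h

theorem DD_neg {u : ℝ × ℝ → ℝ} (hu : Sm u) (i j : ℕ) : DD i j (fun p => - u p) = - DD i j u := by
  have h := DD_add hu hu.neg i j
  simp only [add_neg_cancel] at h
  rw [DD_zero] at h
  linarith

theorem DD_sub {u v : ℝ × ℝ → ℝ} (hu : Sm u) (hv : Sm v) (i j : ℕ) :
    DD i j (fun p => u p - v p) = DD i j u - DD i j v := by
  have h := DD_add hu hv.neg i j
  rw [DD_neg hv] at h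
  simpa [sub_eq_add_neg] using h

/-- Taylor formula. -/
theorem taylor_box (N : ℕ) {u : ℝ × ℝ → ℝ} (hu : Sm u) :
    OO N (fun p => u p - box N (tcoeff u) p) := by
  refine OO.of_DD (hu.sub (box_sm _ _)) fun i j hij => ?_
  rw [DD_sub hu (box_sm _ _), DD_box _ _ _ _ (by omega) (by omega)]
  have hi : (i.factorial : ℝ) ≠ 0 := by positivity
  have hj : (j.factorial : ℝ) ≠ 0 := by positivity
  unfold tcoeff
  rw [div_mul_cancel₀ _ (mul_ne_zero hi hj)]
  exact sub_self _

theorem tcoeff_eq (u : ℝ × ℝ → ℝ) (i j : ℕ) :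
    tcoeff u i j = DD i j u / (i.factorial * j.factorial) := rfl


theorem OO.DD {N : ℕ} : ∀ {u : ℝ × ℝ → ℝ}, Sm u → OO N u → ∀ i j, i + j < N →
    _root_.DD i j u = 0 := by
  induction N with
  | zero => intro u _ _ i j h; omega
  | succ N ih =>
    intro u hu hO i j hij
    have hlow : ∀ i j, i + j < N → _root_.DD i j u = 0 := ih hu (hO.mono (Nat.le_succ N))
    rcases Nat.lt_or_ge (i + j) N with h | h
    · exact hlow i j h
    have hijN : i + j = N := by omega
    set a := tcoeff u with ha
    have ha0 : ∀ i j, i + j < N → a i j = 0 := fun i j h => by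
      rw [ha, tcoeff_eq, hlow i j h, zero_div]
    have hbox : OO (N + 1) (box (N + 1) a) :=
      (hO.sub (taylor_box (N + 1) hu)).congr fun p => by simp [ha]
    have hs : ∀ s : ℝ, ∑ j ∈ Finset.range (N + 1), a (N - j) j * s ^ j = 0 := by
      intro s
      let q : ℝ → ℝ := fun t => ∑ i ∈ Finset.range (N + 1), ∑ j ∈ Finset.range (N + 1),
        a i j * s ^ j * (if N ≤ i + j then t ^ (i + j - N) else 0)
      have hqc : Continuous q := by
        refine continuous_finsetSum _ fun i _ => continuous_finsetSum _ fun j _ => ?_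
        split_ifs
        · fun_prop
        · fun_prop
      have hq : ∀ t, box (N + 1) a (t, s * t) = t ^ N * q t := by
        intro t
        simp only [box, q, Finset.mul_sum]
        refine Finset.sum_congr rfl fun i _ => Finset.sum_congr rfl fun j _ => ?_
        split_ifs with hN
        · have : t ^ (i + j) = t ^ N * t ^ (i + j - N) := by
            rw [← pow_add]; congr 1; omega
          calc a i j * (t ^ i * (s * t) ^ j) = a i j * s ^ j * t ^ (i + j) := by
                rw [mul_pow, pow_add]; ring
            _ = _ := by rw [this]; ring
        · rw [ha0 i j (by omega)]; simp
      have hcurve : OO 1 (fun t : ℝ => ((t, s * t) : ℝ × ℝ)) := by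
        refine OO.of_differentiableAt ?_ (by simp)
        fun_prop
      have hO2 : OO (N + 1) (fun t : ℝ => t ^ N * q t) :=
        (hbox.comp hcurve).congr fun t => (hq t).symm
      obtain ⟨C, hC⟩ := hO2.bound
      have hlim : Tendsto q (𝓝[≠] 0) (𝓝 0) := by
        have h0 : Tendsto (fun t : ℝ => C * ‖t‖) (𝓝[≠] 0) (𝓝 0) := by
          have : Continuous fun t : ℝ => C * ‖t‖ := by fun_prop
          simpa using (this.tendsto 0).mono_left nhdsWithin_le_nhds
        refine squeeze_zero_norm' ?_ h0
        filter_upwards [nhdsWithin_le_nhds hC, self_mem_nhdsWithin] with t ht ht0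
        have htp : 0 < ‖t‖ ^ N := pow_pos (norm_pos_iff.2 ht0) N
        rw [norm_mul, norm_pow, norm_pow, norm_norm, pow_succ] at ht
        refine le_of_mul_le_mul_left ?_ htp
        linarith
      have hq0 : q 0 = 0 :=
        tendsto_nhds_unique ((hqc.tendsto 0).mono_left nhdsWithin_le_nhds) hlim
      rw [← hq0]
      simp only [q]
      rw [Finset.sum_comm]
      refine Finset.sum_congr rfl fun j hj => ?_
      have hjN : j ≤ N := Nat.lt_succ_iff.1 (Finset.mem_range.1 hj)
      rw [Finset.sum_eq_single (N - j)]
      · rw [if_pos (by omega)]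
        have : N - j + j - N = 0 := by omega
        rw [this]; simp
      · intro b _ hb
        split_ifs with h
        · rw [zero_pow (by omega)]; simp
        · simp
      · intro h; exact absurd (Finset.mem_range.2 (by omega)) h
    let P : Polynomial ℝ := ∑ j ∈ Finset.range (N + 1),
      Polynomial.C (a (N - j) j) * Polynomial.X ^ j
    have hP : P = 0 := by
      refine Polynomial.funext fun s => ?_
      simp only [P, Polynomial.eval_finsetSum, Polynomial.eval_mul, Polynomial.eval_C,
        Polynomial.eval_pow, Polynomial.eval_X, Polynomial.eval_zero]
      exact hs s
    have hcoef : P.coeff j = a i j := by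
      simp only [P, Polynomial.finsetSum_coeff, Polynomial.coeff_C_mul, Polynomial.coeff_X_pow]
      rw [Finset.sum_eq_single j]
      · have : N - j = i := by omega
        simp [this]
      · intro b _ hb; simp [hb.symm]
      · intro h; exact absurd (Finset.mem_range.2 (by omega)) h
    rw [hP, Polynomial.coeff_zero, ha, tcoeff_eq, eq_comm, div_eq_zero_iff] at hcoef
    rcases hcoef with h | h
    · exact h
    · exfalso
      have hi : (i.factorial : ℝ) ≠ 0 := by positivity
      have hj : (j.factorial : ℝ) ≠ 0 := by positivity
      exact mul_ne_zero hi hj h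

theorem OO.pdx {N : ℕ} {u : ℝ × ℝ → ℝ} (hu : Sm u) (h : OO (N + 1) u) : OO N (pdx u) :=
  OO.of_DD hu.pdx fun i j hij => by rw [DD_pdx hu]; exact h.DD hu _ _ (by omega)

theorem OO.pdy {N : ℕ} {u : ℝ × ℝ → ℝ} (hu : Sm u) (h : OO (N + 1) u) : OO N (pdy u) :=
  OO.of_DD hu.pdy fun i j hij => by rw [DD_pdy]; exact h.DD hu _ _ (by omega)

theorem OO.tcoeff {N : ℕ} {u : ℝ × ℝ → ℝ} (hu : Sm u) (h : OO N u) (i j : ℕ) (hij : i + j < N) :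
    tcoeff u i j = 0 := by rw [tcoeff_eq, h.DD hu i j hij, zero_div]

/-- Jets and orders, scalar case. -/
theorem iter_of_OO {N : ℕ} : ∀ {u : ℝ × ℝ → ℝ}, Sm u → OO (N + 1) u →
    iteratedFDeriv ℝ N u 0 = 0 := by
  induction N with
  | zero =>
    intro u hu h
    ext m
    simpa using h.zero_at
  | succ N ih =>
    intro u hu h
    have hx := ih hu.pdx (h.pdx hu)
    have hy := ih hu.pdy (h.pdy hu)
    rw [iteratedFDeriv_succ_eq_comp_right, Function.comp_apply]
    have e : (fun y => fderiv ℝ u y) =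
        (ContinuousLinearMap.smulRight (ContinuousLinearMap.id ℝ ℝ)
          (ContinuousLinearMap.fst ℝ ℝ ℝ)) ∘ pdx u +
        (ContinuousLinearMap.smulRight (ContinuousLinearMap.id ℝ ℝ)
          (ContinuousLinearMap.snd ℝ ℝ ℝ)) ∘ pdy u := by
      funext p
      rw [fderiv_eq_pd u p]; rfl
    have hle : (N : WithTop ℕ∞) ≤ ((⊤ : ℕ∞) : WithTop ℕ∞) := by exact_mod_cast le_top
    have hxN : ContDiffAt ℝ N (pdx u) 0 := hu.pdx.contDiffAt.of_le hle
    have hyN : ContDiffAt ℝ N (pdy u) 0 := hu.pdy.contDiffAt.of_le hle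
    rw [e, iteratedFDeriv_add_apply (hxN.continuousLinearMap_comp _)
      (hyN.continuousLinearMap_comp _),
      ContinuousLinearMap.iteratedFDeriv_comp_left _ hxN le_rfl,
      ContinuousLinearMap.iteratedFDeriv_comp_left _ hyN le_rfl, hx, hy]
    ext m
    simp

theorem OO_of_iter {N : ℕ} : ∀ {u : ℝ × ℝ → ℝ}, Sm u →
    (∀ i < N, iteratedFDeriv ℝ i u 0 = 0) → OO N u := by
  induction N with
  | zero => intro u hu _; exact OO.of_continuousAt hu.continuous.continuousAt
  | succ N ih =>
    intro u hu h
    have hd : Sm (fderiv ℝ u) := hu.fderiv_right (by simp)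
    have h1 : ∀ i < N, iteratedFDeriv ℝ i (fderiv ℝ u) 0 = 0 := by
      intro i hi
      have := h (i + 1) (by omega)
      rw [iteratedFDeriv_succ_eq_comp_right, Function.comp_apply] at this
      exact (LinearIsometryEquiv.map_eq_zero_iff _).1 this
    have h2 : ∀ v, ∀ i < N, iteratedFDeriv ℝ i (dop v u) 0 = 0 := by
      intro v i hi
      have hle : (i : WithTop ℕ∞) ≤ ((⊤ : ℕ∞) : WithTop ℕ∞) := by exact_mod_cast le_top
      have e : dop v u = (ContinuousLinearMap.apply ℝ ℝ v) ∘ (fderiv ℝ u) := rfl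
      rw [e, ContinuousLinearMap.iteratedFDeriv_comp_left _ hd.contDiffAt hle, h1 i hi]
      ext m
      simp
    refine OO.of_pd hu ?_ (ih hu.pdx (h2 _)) (ih hu.pdy (h2 _))
    have := congrArg (fun L => L 0) (h 0 (by omega))
    simpa using this

/-- Jets and orders, planar maps. -/
theorem jets_iff_OO {r : ℕ} {F G : ℝ × ℝ → ℝ × ℝ} (hF : Sm F) (hG : Sm G) :
    (∀ i ≤ r, iteratedFDeriv ℝ i F 0 = iteratedFDeriv ℝ i G 0) ↔
      OO (r + 1) (fun p => F p - G p) := by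
  have hle : ∀ i : ℕ, (i : WithTop ℕ∞) ≤ ((⊤ : ℕ∞) : WithTop ℕ∞) := by
    intro i; exact_mod_cast le_top
  have hu : Sm (fun p => F p - G p) := hF.sub hG
  have e : ∀ i : ℕ, iteratedFDeriv ℝ i (fun p => F p - G p) 0 =
      iteratedFDeriv ℝ i F 0 - iteratedFDeriv ℝ i G 0 := fun i =>
    iteratedFDeriv_sub_apply (hF.contDiffAt.of_le (hle i)) (hG.contDiffAt.of_le (hle i))
  have e1 : ∀ i : ℕ, iteratedFDeriv ℝ i (fun p => (F p - G p).1) 0 =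
    (ContinuousLinearMap.fst ℝ ℝ ℝ).compContinuousMultilinearMap
      (iteratedFDeriv ℝ i (fun p => F p - G p) 0) := fun i =>
    ContinuousLinearMap.iteratedFDeriv_comp_left (ContinuousLinearMap.fst ℝ ℝ ℝ) hu.contDiffAt (hle i)
  have e2 : ∀ i : ℕ, iteratedFDeriv ℝ i (fun p => (F p - G p).2) 0 =
    (ContinuousLinearMap.snd ℝ ℝ ℝ).compContinuousMultilinearMap
      (iteratedFDeriv ℝ i (fun p => F p - G p) 0) := fun i =>
    ContinuousLinearMap.iteratedFDeriv_comp_left (ContinuousLinearMap.snd ℝ ℝ ℝ) hu.contDiffAt (hle i)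
  constructor
  · intro h
    refine (OO.prodMk (OO_of_iter (N := r + 1) hu.fst fun i hi => ?_)
      (OO_of_iter (N := r + 1) hu.snd fun i hi => ?_)).congr fun p => rfl
    · rw [e1, e, h i (by omega), sub_self]; ext m; simp
    · rw [e2, e, h i (by omega), sub_self]; ext m; simp
  · intro h i hi
    rw [← sub_eq_zero, ← e]
    have h1 := iter_of_OO (N := i) hu.fst (h.fst.mono (by omega))
    have h2 := iter_of_OO (N := i) hu.snd (h.snd.mono (by omega))
    erw [e1] at h1
    erw [e2] at h2
    ext m
    · simpa using congrArg (fun L => L m) h1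
    · simpa using congrArg (fun L => L m) h2


theorem lin_expand (L : ℝ × ℝ →L[ℝ] ℝ × ℝ) (v : ℝ × ℝ) :
    L v = v.1 • L (1, 0) + v.2 • L (0, 1) := by
  have : v = v.1 • ((1 : ℝ), (0 : ℝ)) + v.2 • ((0 : ℝ), (1 : ℝ)) := by
    ext <;> simp
  conv_lhs => rw [this]
  rw [map_add, map_smul, map_smul]

theorem jacDet_comp {f g : ℝ × ℝ → ℝ × ℝ} {p : ℝ × ℝ} (hg : DifferentiableAt ℝ g (f p))
    (hf : DifferentiableAt ℝ f p) :
    jacDet (fun q => g (f q)) p = jacDet g (f p) * jacDet f p := by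
  unfold jacDet
  rw [fderiv_fun_comp p hg hf]
  simp only [ContinuousLinearMap.comp_apply]
  rw [lin_expand (fderiv ℝ g (f p)) (fderiv ℝ f p (1, 0)),
    lin_expand (fderiv ℝ g (f p)) (fderiv ℝ f p (0, 1))]
  simp only [Prod.fst_add, Prod.snd_add, Prod.smul_fst, Prod.smul_snd, smul_eq_mul]
  ring

theorem bij_iff (L : ℝ × ℝ →L[ℝ] ℝ × ℝ) : Function.Bijective (⇑L) ↔
    (L (1, 0)).1 * (L (0, 1)).2 - (L (1, 0)).2 * (L (0, 1)).1 ≠ 0 := by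
  constructor
  · intro hb hdet
    have hinj : ∀ v, L v = 0 → v = 0 := fun v hv => hb.1 (hv.trans (map_zero L).symm)
    have h1 := hinj ((L (0, 1)).1, -(L (1, 0)).1) (by
      rw [lin_expand]; ext
      · simp; ring
      · simp; linarith)
    have h2 := hinj ((L (0, 1)).2, -(L (1, 0)).2) (by
      rw [lin_expand]; ext
      · simp; linarith
      · simp; ring)
    have h3 := hinj (1, 0) (by
      ext
      · simpa using congrArg Prod.snd h1
      · simpa using congrArg Prod.snd h2)
    simpa using congrArg Prod.fst h3
  · intro hdet
    have hinj : Function.Injective (L : ℝ × ℝ →ₗ[ℝ] ℝ × ℝ) := by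
      rw [injective_iff_map_eq_zero]
      intro v hv
      have hv' : L v = 0 := hv
      rw [lin_expand] at hv'
      have e1 := congrArg Prod.fst hv'
      have e2 := congrArg Prod.snd hv'
      simp at e1 e2
      ext
      · refine (mul_eq_zero.1 (?_ : v.1 * ((L (1, 0)).1 * (L (0, 1)).2
          - (L (1, 0)).2 * (L (0, 1)).1) = 0)).resolve_right hdet
        linear_combination (L (0, 1)).2 * e1 - (L (0, 1)).1 * e2
      · refine (mul_eq_zero.1 (?_ : v.2 * ((L (1, 0)).1 * (L (0, 1)).2
          - (L (1, 0)).2 * (L (0, 1)).1) = 0)).resolve_right hdet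
        linear_combination (L (1, 0)).1 * e2 - (L (1, 0)).2 * e1
    exact ⟨hinj, LinearMap.injective_iff_surjective.1 hinj⟩

theorem bij_jac (φ : ℝ × ℝ → ℝ × ℝ) : Function.Bijective (⇑(fderiv ℝ φ 0)) ↔ jacDet φ 0 ≠ 0 :=
  bij_iff _

theorem fderiv_fst' {f : ℝ × ℝ → ℝ × ℝ} {p : ℝ × ℝ} (hf : DifferentiableAt ℝ f p) (v : ℝ × ℝ) :
    (fderiv ℝ f p v).1 = dop v (fun q => (f q).1) p := by
  unfold dop
  rw [fderiv.fst hf]; rfl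

theorem fderiv_snd' {f : ℝ × ℝ → ℝ × ℝ} {p : ℝ × ℝ} (hf : DifferentiableAt ℝ f p) (v : ℝ × ℝ) :
    (fderiv ℝ f p v).2 = dop v (fun q => (f q).2) p := by
  unfold dop
  rw [fderiv.snd hf]; rfl

theorem jacDet_eq {f : ℝ × ℝ → ℝ × ℝ} (hf : Sm f) (p : ℝ × ℝ) :
    jacDet f p = pdx (fun q => (f q).1) p * pdy (fun q => (f q).2) p -
      pdx (fun q => (f q).2) p * pdy (fun q => (f q).1) p := by
  unfold jacDet
  simp only [fderiv_fst' (hf.diff p), fderiv_snd' (hf.diff p)]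
  rfl

theorem jacDet_sm {f : ℝ × ℝ → ℝ × ℝ} (hf : Sm f) : Sm (jacDet f) := by
  have h1 : Sm (fun q => (f q).1) := hf.fst
  have h2 : Sm (fun q => (f q).2) := hf.snd
  have : jacDet f = _ := funext (jacDet_eq hf)
  rw [this]
  exact (h1.pdx.mul h2.pdy).sub (h2.pdx.mul h1.pdy)

/-- Jet equivalence in terms of orders. -/
def JE (r : ℕ) (f g : ℝ × ℝ → ℝ × ℝ) : Prop :=
  ∃ φ ψ : ℝ × ℝ → ℝ × ℝ, Sm φ ∧ Sm ψ ∧ φ 0 = 0 ∧ ψ 0 = 0 ∧ jacDet φ 0 ≠ 0 ∧ jacDet ψ 0 ≠ 0 ∧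
    OO (r + 1) (fun p => ψ (f (φ p)) - g p)

theorem JetEquiv_iff {r : ℕ} {f g : ℝ × ℝ → ℝ × ℝ} (hf : Sm f) (hg : Sm g) :
    JetEquiv r f g ↔ JE r f g := by
  unfold JetEquiv JE
  constructor
  · rintro ⟨φ, ψ, h1, h2, h3, h4, h5, h6, h7⟩
    exact ⟨φ, ψ, h1, h2, h3, h4, (bij_jac φ).1 h5, (bij_jac ψ).1 h6,
      (jets_iff_OO (h2.comp (hf.comp h1)) hg).1 h7⟩
  · rintro ⟨φ, ψ, h1, h2, h3, h4, h5, h6, h7⟩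
    exact ⟨φ, ψ, h1, h2, h3, h4, (bij_jac φ).2 h5, (bij_jac ψ).2 h6,
      (jets_iff_OO (h2.comp (hf.comp h1)) hg).2 h7⟩

theorem Sm.OO1 {E F : Type*} [NormedAddCommGroup E] [NormedAddCommGroup F] [NormedSpace ℝ E]
    [NormedSpace ℝ F] {u : E → F} (hu : Sm u) (h0 : u 0 = 0) : OO 1 u :=
  OO.of_differentiableAt (hu.diff 0) h0

theorem JE.trans {r : ℕ} {f g h : ℝ × ℝ → ℝ × ℝ} (hf : Sm f) (hg : Sm g) (hf0 : f 0 = 0)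
    (hg0 : g 0 = 0) (h1 : JE r f g) (h2 : JE r g h) : JE r f h := by
  obtain ⟨φ, ψ, a1, a2, a3, a4, a5, a6, a7⟩ := h1
  obtain ⟨φ', ψ', b1, b2, b3, b4, b5, b6, b7⟩ := h2
  refine ⟨fun p => φ (φ' p), fun p => ψ' (ψ p), a1.comp b1, b2.comp a2, by simp [a3, b3],
    by simp [a4, b4], ?_, ?_, ?_⟩
  · rw [jacDet_comp (a1.diff _) (b1.diff _), b3]
    exact mul_ne_zero a5 b5
  · rw [jacDet_comp (b2.diff _) (a2.diff _), a4]
    exact mul_ne_zero b6 a6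
  · have hφ' : OO 1 φ' := b1.OO1 b3
    have k1 : OO (r + 1) (fun p => ψ (f (φ (φ' p))) - g (φ' p)) := a7.comp hφ'
    have t1 : Tendsto (fun p => ψ (f (φ (φ' p)))) (𝓝 0) (𝓝 0) := by
      have : Continuous (fun p => ψ (f (φ (φ' p)))) :=
        a2.continuous.comp (hf.continuous.comp (a1.continuous.comp b1.continuous))
      simpa [b3, a3, hf0, a4] using this.tendsto 0
    have t2 : Tendsto (fun p => g (φ' p)) (𝓝 0) (𝓝 0) := by
      have : Continuous (fun p => g (φ' p)) := hg.continuous.comp b1.continuous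
      simpa [b3, hg0] using this.tendsto 0
    have k2 := OO.comp_sub (b2.one 0) t1 t2 k1
    exact (k2.add b7).congr fun p => by abel

/-- the map `(x, h(x,y))` -/
def MM (h : ℝ × ℝ → ℝ) : ℝ × ℝ → ℝ × ℝ := fun p => (p.1, h p)

theorem MM_sm {h : ℝ × ℝ → ℝ} (hh : Sm h) : Sm (MM h) := contDiff_fst.prodMk hh

theorem MM_zero {h : ℝ × ℝ → ℝ} (hh : h 0 = 0) : MM h 0 = 0 := by simp [MM, hh]

theorem pdx_fst (p : ℝ × ℝ) : pdx (fun q => q.1) p = 1 := by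
  simp [pdx, dop, fderiv_fst]
theorem pdy_fst (p : ℝ × ℝ) : pdy (fun q => q.1) p = 0 := by
  simp [pdy, dop, fderiv_fst]
theorem pdx_snd (p : ℝ × ℝ) : pdx (fun q => q.2) p = 0 := by
  simp [pdx, dop, fderiv_snd]
theorem pdy_snd (p : ℝ × ℝ) : pdy (fun q => q.2) p = 1 := by
  simp [pdy, dop, fderiv_snd]

theorem jacDet_MM {h : ℝ × ℝ → ℝ} (hh : Sm h) (p : ℝ × ℝ) : jacDet (MM h) p = pdy h p := by
  rw [jacDet_eq (MM_sm hh)]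
  simp only [MM]
  rw [pdx_fst, pdy_fst]
  simp

theorem JE.comb {r : ℕ} {h h' w : ℝ × ℝ → ℝ} {q : ℝ → ℝ} (hw : Sm w) (hq : Sm q) (hw0 : w 0 = 0)
    (hwy : pdy w 0 = 0) (hq0 : q 0 = 0)
    (hO : OO (r + 1) (fun p => h (p.1, p.2 + w p) - q p.1 - h' p)) : JE r (MM h) (MM h') := by
  have hs : Sm (fun p : ℝ × ℝ => p.2 + w p) := contDiff_snd.add hw
  have hs' : Sm (fun p : ℝ × ℝ => p.2 - q p.1) := contDiff_snd.sub (hq.comp contDiff_fst)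
  refine ⟨MM (fun p => p.2 + w p), MM (fun p => p.2 - q p.1), MM_sm hs, MM_sm hs',
    MM_zero (by simp [hw0]), MM_zero (by simp [hq0]), ?_, ?_, ?_⟩
  · rw [jacDet_MM hs, pdy_add contDiff_snd hw]
    simp [pdy_snd, hwy]
  · rw [jacDet_MM hs']
    have hq1 : Sm (fun p : ℝ × ℝ => q p.1) := hq.comp contDiff_fst
    have e : (fun p : ℝ × ℝ => p.2 - q p.1) = fun p => p.2 + (- q p.1) := by
      funext p; ring
    have e2 := pdy_snd 0
    rw [e, pdy_add contDiff_snd hq1.neg]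
    have : pdy (fun p : ℝ × ℝ => - q p.1) 0 = 0 := by
      simp only [pdy, dop]
      have h1 : HasFDerivAt (fun p : ℝ × ℝ => - q p.1) (-((fderiv ℝ q 0).comp
          (ContinuousLinearMap.fst ℝ ℝ ℝ))) (0 : ℝ × ℝ) := by
        have h2 : HasFDerivAt q (fderiv ℝ q 0) ((0 : ℝ × ℝ)).1 := (hq.diff 0).hasFDerivAt
        exact (h2.comp (0 : ℝ × ℝ) hasFDerivAt_fst).neg
      rw [h1.fderiv]
      simp
    simp only [this]
    erw [e2]; simp
  · refine (OO.prodMk (u := fun _ => (0 : ℝ)) ?_ hO).congr fun p => ?_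
    · exact isBigO_zero _ _
    · simp [MM]

/-- Mean value estimate with orders. -/
theorem OO.comp_sub_order {E F G : Type*} [NormedAddCommGroup E] [NormedAddCommGroup F]
    [NormedAddCommGroup G] [NormedSpace ℝ F] [NormedSpace ℝ G] {k M : ℕ} {e : F → G}
    {u v : E → F} (hd : ∀ᶠ p in 𝓝 (0 : F), DifferentiableAt ℝ e p)
    (he : OO k (fun p => fderiv ℝ e p)) (hu : OO 1 u) (hv : OO 1 v)
    (huv : OO M (fun p => u p - v p)) : OO (k + M) (fun p => e (u p) - e (v p)) := by
  obtain ⟨C, hC0, hC⟩ := he.exists_nonneg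
  obtain ⟨ε, hε, hball⟩ := Metric.eventually_nhds_iff_ball.1 (hd.and hC.bound)
  obtain ⟨A, hA0, hA⟩ := hu.exists_nonneg
  obtain ⟨B, hB0, hB⟩ := hv.exists_nonneg
  have hut : ∀ᶠ p in 𝓝 (0 : E), u p ∈ Metric.ball (0 : F) ε :=
    (OO.tendsto (N := 0) hu) (Metric.ball_mem_nhds _ hε)
  have hvt : ∀ᶠ p in 𝓝 (0 : E), v p ∈ Metric.ball (0 : F) ε :=
    (OO.tendsto (N := 0) hv) (Metric.ball_mem_nhds _ hε)
  have main : (fun p => e (u p) - e (v p)) =O[𝓝 (0 : E)]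
      (fun p => ‖p‖ ^ k * ‖u p - v p‖) := by
    refine IsBigO.of_bound (C * (A + B) ^ k) ?_
    filter_upwards [hut, hvt, hA.bound, hB.bound] with p h1 h2 h3 h4
    rw [mem_ball_zero_iff] at h1 h2
    simp only [pow_one, norm_norm] at h3 h4
    have key := (convex_closedBall (0 : F) (max ‖u p‖ ‖v p‖)).norm_image_sub_le_of_norm_fderiv_le
      (𝕜 := ℝ) (f := e) (C := C * ((A + B) * ‖p‖) ^ k) (x := v p) (y := u p)
      (fun q hq => (hball q (by
        have : ‖q‖ ≤ _ := mem_closedBall_zero_iff.1 hq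
        exact mem_ball_zero_iff.2 (this.trans_lt (max_lt h1 h2)))).1)
      (fun q hq => by
        have h5 : ‖q‖ ≤ _ := mem_closedBall_zero_iff.1 hq
        have h6 := (hball q (mem_ball_zero_iff.2 (h5.trans_lt (max_lt h1 h2)))).2
        rw [norm_pow, norm_norm] at h6
        refine h6.trans ?_
        have h7 : ‖q‖ ≤ (A + B) * ‖p‖ := by
          refine h5.trans (max_le ?_ ?_)
          · nlinarith [norm_nonneg p]
          · nlinarith [norm_nonneg p]
        gcongr)
      (by simp) (by simp)
    rw [norm_mul, norm_pow, norm_norm, norm_norm]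
    calc _ ≤ _ := key
      _ = _ := by rw [mul_pow]; ring
  refine main.trans ?_
  have : (fun p : E => ‖p‖ ^ k * ‖u p - v p‖) =O[𝓝 (0 : E)] fun p => ‖p‖ ^ k * ‖p‖ ^ M :=
    (isBigO_refl _ _).mul huv.norm_left
  exact this.congr_right fun p => (pow_add _ _ _).symm

theorem OO.fderiv_of_sm {N : ℕ} {u : ℝ × ℝ → ℝ} (hu : Sm u) (h : OO (N + 1) u) :
    OO N (fun p => fderiv ℝ u p) := by
  have h1 : OO N (fun p => _root_.pdx u p • ContinuousLinearMap.fst ℝ ℝ ℝ) :=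
    IsBigO.trans (IsBigO.of_bound ‖ContinuousLinearMap.fst ℝ ℝ ℝ‖
      (Eventually.of_forall fun p => by rw [norm_smul, mul_comm])) (h.pdx hu)
  have h2 : OO N (fun p => _root_.pdy u p • ContinuousLinearMap.snd ℝ ℝ ℝ) :=
    IsBigO.trans (IsBigO.of_bound ‖ContinuousLinearMap.snd ℝ ℝ ℝ‖
      (Eventually.of_forall fun p => by rw [norm_smul, mul_comm])) (h.pdy hu)
  exact (h1.add h2).congr fun p => fderiv_eq_pd u p

theorem OO_fst : OO 1 (fun p : ℝ × ℝ => p.1) := Sm.OO1 contDiff_fst rfl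
theorem OO_snd : OO 1 (fun p : ℝ × ℝ => p.2) := Sm.OO1 contDiff_snd rfl

theorem OO_mon {i j N : ℕ} (c : ℝ) (h : N ≤ i + j) :
    OO N (fun p : ℝ × ℝ => c * (p.1 ^ i * p.2 ^ j)) :=
  (((OO_fst.pow1 i).mul (OO_snd.pow1 j)).const_mul c).mono h

theorem pow_sub_OO {r M : ℕ} (hr : 1 ≤ r) {u v : ℝ × ℝ → ℝ} (hu : OO 1 u) (hv : OO 1 v)
    (h : OO M (fun p => u p - v p)) : OO (r - 1 + M) (fun p => u p ^ r - v p ^ r) := by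
  have h1 : OO (r - 1) (fun p => ∑ i ∈ Finset.range r, u p ^ i * v p ^ (r - 1 - i)) := by
    refine OO.sum fun i hi => ?_
    have := (hu.pow1 i).mul (hv.pow1 (r - 1 - i))
    refine this.mono ?_
    have := Finset.mem_range.1 hi
    omega
  refine (h1.mul h).congr fun p => ?_
  rw [← (Commute.all (u p) (v p)).mul_geom_sum₂ r]; ring


theorem quad_taylor {u : ℝ × ℝ → ℝ} (hu : Sm u) :
    OO 3 (fun p => u p - (tcoeff u 0 0 + tcoeff u 1 0 * p.1 + tcoeff u 0 1 * p.2
      + tcoeff u 2 0 * p.1 ^ 2 + tcoeff u 1 1 * (p.1 * p.2) + tcoeff u 0 2 * p.2 ^ 2)) := by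
  have h := taylor_box 3 hu
  have h1 := OO_mon (i := 1) (j := 2) (N := 3) (tcoeff u 1 2) (by norm_num)
  have h2 := OO_mon (i := 2) (j := 1) (N := 3) (tcoeff u 2 1) (by norm_num)
  have h3 := OO_mon (i := 2) (j := 2) (N := 3) (tcoeff u 2 2) (by norm_num)
  refine (((h.add h1).add h2).add h3).congr fun p => ?_
  simp only [box, Finset.sum_range_succ, Finset.sum_range_zero]
  ring

/-- The intermediate normal form. -/
def NF (r : ℕ) (α c : ℝ) (e : ℝ × ℝ → ℝ) : ℝ × ℝ → ℝ :=
  fun p => α * (p.1 * p.2 ^ 2) + c * p.2 ^ r + p.1 * e p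

theorem NF_sm {r : ℕ} {α c : ℝ} {e : ℝ × ℝ → ℝ} (he : Sm e) : Sm (NF r α c e) := by
  have he' : ContDiff ℝ (⊤ : ℕ∞) e := he
  unfold NF Sm; fun_prop

theorem NF_zero {r : ℕ} (hr : 4 ≤ r) {α c : ℝ} {e : ℝ × ℝ → ℝ} : NF r α c e 0 = 0 := by
  have : r ≠ 0 := by omega
  simp [NF, this]

theorem NF_step {r N : ℕ} (hr : 4 ≤ r) (hN : 3 ≤ N) {α c : ℝ} (hα : α ≠ 0) {e : ℝ × ℝ → ℝ}
    (he : Sm e) (heO : OO N e) :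
    ∃ e', Sm e' ∧ OO (N + 1) e' ∧ JE r (MM (NF r α c e)) (MM (NF r α c e')) := by
  set a := tcoeff e with ha
  have ha0 : ∀ i j, i + j < N → a i j = 0 := heO.tcoeff he
  have hT : OO (N + 1) (fun p => e p - box (N + 1) a p) := taylor_box (N + 1) he
  let P : ℝ → ℝ := fun x => ∑ i ∈ Finset.range (N + 1), a i 0 * x ^ i
  let e1 : ℝ × ℝ → ℝ := fun p => ∑ i ∈ Finset.range (N + 1), ∑ j ∈ Finset.range N,
    a i (j + 1) * (p.1 ^ i * p.2 ^ j)
  have hPsm : Sm P := by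
    show ContDiff _ _ _
    simp only [P]; fun_prop
  have he1 : Sm e1 := by
    show ContDiff _ _ _
    simp only [e1]; fun_prop
  have hbox : ∀ p, box (N + 1) a p = P p.1 + p.2 * e1 p := by
    intro p
    simp only [box, P, e1, Finset.mul_sum]
    rw [← Finset.sum_add_distrib]
    refine Finset.sum_congr rfl fun i _ => ?_
    rw [Finset.sum_range_succ', add_comm]
    congr 1
    · simp
    · refine Finset.sum_congr rfl fun j _ => ?_
      rw [pow_succ]; ring
  have he1O : OO (N - 1) e1 := by
    refine OO.sum fun i _ => OO.sum fun j _ => ?_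
    rcases Nat.lt_or_ge (i + (j + 1)) N with h | h
    · simp only [ha0 i (j + 1) h, zero_mul]
      exact isBigO_zero _ _
    · exact OO_mon _ (by omega)
  let w : ℝ × ℝ → ℝ := fun p => -(1 / (2 * α)) * e1 p
  have hw : Sm w := contDiff_const.mul he1
  have hwO : OO (N - 1) w := he1O.const_mul _
  have hw2 : OO 2 w := hwO.mono (by omega)
  have hu : Sm (fun p : ℝ × ℝ => (p.1, p.2 + w p)) := contDiff_fst.prodMk (contDiff_snd.add hw)
  have hw0 : w 0 = 0 := hw2.zero_at
  let d : ℝ × ℝ → ℝ := fun p => e (p.1, p.2 + w p) - e p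
  have hd : Sm d := (he.comp hu).sub he
  have hdO : OO (N + 1) d := by
    have h3 : OO (2 + 1) e := heO.mono (by omega)
    have := OO.comp_sub_order (e := e) (u := fun p : ℝ × ℝ => (p.1, p.2 + w p))
      (v := fun p => p) (k := 2) (M := N - 1) (Eventually.of_forall fun p => he.diff p)
      (OO.fderiv_of_sm he h3) (hu.OO1 (by simp [hw0])) (Sm.OO1 contDiff_id rfl)
      ((OO.prodMk (u := fun _ => (0 : ℝ)) (isBigO_zero _ _) hwO).congr fun p => by
        ext <;> simp)
    exact OO.mono this (by omega)
  let e' : ℝ × ℝ → ℝ := fun p => (e p - box (N + 1) a p) + α * w p ^ 2 + d p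
  refine ⟨e', ?_, ?_, ?_⟩
  · have h1 : Sm (fun p => α * w p ^ 2) := contDiff_const.mul (hw.pow 2)
    exact ((he.sub (box_sm _ _)).add h1).add hd
  · exact (hT.add (((hwO.pow 2).const_mul α).mono (by omega))).add hdO
  · refine JE.comb (w := w) (q := fun x => x * P x) hw (contDiff_id.mul hPsm) hw0 ?_ (by simp) ?_
    · exact OO.zero_at (N := 0) (OO.pdy hw hw2)
    · have hy : OO 1 (fun p : ℝ × ℝ => p.2 + w p) := OO_snd.add (hw2.mono (by norm_num))
      have hpow := (pow_sub_OO (r := r) (M := 2) (by omega) hy OO_snd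
        (hw2.congr fun p => by ring)).const_mul c
      have hpow' := hpow.mono (M := r + 1) (by omega)
      refine hpow'.congr fun p => ?_
      simp only [NF, e', d, hbox]
      have hwp : 2 * α * w p = - e1 p := by
        simp only [w]; field_simp
      linear_combination (p.1 * p.2) * hwp

theorem JE.refl {r : ℕ} (h : ℝ × ℝ → ℝ) : JE r (MM h) (MM h) := by
  refine JE.comb (w := fun _ => 0) (q := fun _ => 0) contDiff_const contDiff_const rfl
    (by simp [pdy, dop]) rfl ?_
  exact OO.congr (u := fun _ => (0 : ℝ)) (isBigO_zero _ _) fun p => by simp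

theorem NF_steps {r N : ℕ} (hr : 4 ≤ r) (hN : 3 ≤ N) {α c : ℝ} (hα : α ≠ 0) {e : ℝ × ℝ → ℝ}
    (he : Sm e) (heO : OO 3 e) :
    ∃ e', Sm e' ∧ OO N e' ∧ JE r (MM (NF r α c e)) (MM (NF r α c e')) := by
  induction N, hN using Nat.le_induction with
  | base => exact ⟨e, he, heO, JE.refl _⟩
  | succ N hN ih =>
    obtain ⟨e1, h1, h2, h3⟩ := ih
    obtain ⟨e2, k1, k2, k3⟩ := NF_step (c := c) hr hN hα h1 h2
    exact ⟨e2, k1, k2, h3.trans (MM_sm (NF_sm he)) (MM_sm (NF_sm h1)) (MM_zero (NF_zero hr))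
      (MM_zero (NF_zero hr)) k3⟩

theorem jacDet_diag (s t : ℝ) : jacDet (fun p : ℝ × ℝ => (s * p.1, t * p.2)) 0 = s * t := by
  have h : HasFDerivAt (fun p : ℝ × ℝ => (s * p.1, t * p.2))
      ((s • ContinuousLinearMap.fst ℝ ℝ ℝ).prod (t • ContinuousLinearMap.snd ℝ ℝ ℝ)) 0 :=
    (hasFDerivAt_fst.const_mul s).prodMk (hasFDerivAt_snd.const_mul t)
  unfold jacDet
  rw [h.fderiv]
  simp

theorem NF_final {r : ℕ} (hr : 4 ≤ r) {α c : ℝ} (hα : α ≠ 0) (hc : c ≠ 0) {e : ℝ × ℝ → ℝ}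
    (heO : OO r e) :
    JE r (MM (NF r α c e)) (fun p => (p.1, p.1 * p.2 ^ 2 + p.2 ^ r)) := by
  refine ⟨fun p => ((c / α) * p.1, 1 * p.2), fun p => ((α / c) * p.1, (1 / c) * p.2),
    by unfold Sm; fun_prop, by unfold Sm; fun_prop, by simp, by simp, ?_, ?_, ?_⟩
  · rw [jacDet_diag]; simp [hα, hc]
  · rw [jacDet_diag]; simp [hα, hc]
  · have hφ : OO 1 (fun p : ℝ × ℝ => ((c / α) * p.1, 1 * p.2)) :=
      Sm.OO1 (by unfold Sm; fun_prop) (by simp)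
    have h1 := ((OO_fst.mul (heO.comp hφ)).const_mul (1 / α)).mono (M := r + 1) (by omega)
    refine (OO.prodMk (u := fun _ => (0 : ℝ)) (isBigO_zero _ _) h1).congr fun p => ?_
    ext
    · simp [MM]; field_simp; simp
    · simp [MM, NF]; field_simp; ring

theorem NF_init {r : ℕ} (hr : 4 ≤ r) {c : ℝ} {h : ℝ × ℝ → ℝ} (hh : Sm h)
    (h01 : tcoeff h 0 1 = 0) (h02 : tcoeff h 0 2 ≠ 0) :
    ∃ e, Sm e ∧ OO 3 e ∧ JE r (MM (fun p => c * p.2 ^ r + p.1 * h p))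
      (MM (NF r (tcoeff h 0 2) c e)) := by
  set α := tcoeff h 0 2 with hα
  obtain ⟨κ, hκ⟩ : ∃ κ, κ = - tcoeff h 1 1 / (2 * α) := ⟨_, rfl⟩
  have hκ' : tcoeff h 1 1 + 2 * α * κ = 0 := by rw [hκ]; field_simp; ring
  let q : ℝ → ℝ := fun x => tcoeff h 0 0 + tcoeff h 1 0 * x
    + (tcoeff h 2 0 + tcoeff h 1 1 * κ + α * κ ^ 2) * x ^ 2
  have hq : Sm q := by
    show ContDiff _ _ _
    simp only [q]; fun_prop
  let k : ℝ × ℝ → ℝ := fun p => c * (κ * ∑ i ∈ Finset.range r,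
    (p.2 + κ * p.1) ^ i * p.2 ^ (r - 1 - i))
  have hk : Sm k := by
    show ContDiff _ _ _
    simp only [k]; fun_prop
  have hu : Sm (fun p : ℝ × ℝ => (p.1, p.2 + κ * p.1)) := by
    show ContDiff _ _ _
    fun_prop
  have hu1 : OO 1 (fun p : ℝ × ℝ => (p.1, p.2 + κ * p.1)) := hu.OO1 (by simp)
  have hkO : OO 3 k := by
    refine OO.const_mul _ (OO.const_mul _ (OO.sum fun i hi => ?_))
    have := Finset.mem_range.1 hi
    exact ((hu1.snd.pow1 i).mul (OO_snd.pow1 (r - 1 - i))).mono (by omega)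
  have hid : ∀ p : ℝ × ℝ, p.1 * k p = c * (p.2 + κ * p.1) ^ r - c * p.2 ^ r := by
    intro p
    have := (Commute.all (p.2 + κ * p.1) p.2).mul_geom_sum₂ r
    simp only [k]
    linear_combination c * this
  refine ⟨fun p => h (p.1, p.2 + κ * p.1) - α * p.2 ^ 2 - q p.1 + k p, ?_, ?_, ?_⟩
  · have h1 : Sm (fun p : ℝ × ℝ => α * p.2 ^ 2) := by
      show ContDiff _ _ _
      fun_prop
    exact (((hh.comp hu).sub h1).sub (hq.comp contDiff_fst)).add hk
  · refine OO.add ?_ hkO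
    refine ((quad_taylor hh).comp hu1).congr fun p => ?_
    simp only [q, h01, ← hα]
    linear_combination (p.1 * p.2) * hκ'
  · refine JE.comb (w := fun p => κ * p.1) (q := fun x => x * q x) ?_ (contDiff_id.mul hq)
      (by simp) ?_ (by simp) ?_
    · show ContDiff _ _ _
      fun_prop
    · have : HasFDerivAt (fun p : ℝ × ℝ => κ * p.1) (κ • ContinuousLinearMap.fst ℝ ℝ ℝ) 0 :=
        hasFDerivAt_fst.const_mul κ
      simp only [pdy, dop]
      rw [this.fderiv]; simp
    · refine OO.congr (u := fun _ => (0 : ℝ)) (isBigO_zero _ _) fun p => ?_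
      simp only [NF]
      have := hid p
      linear_combination (-1) * this

theorem JE_normal {r : ℕ} (hr : 4 ≤ r) {g : ℝ × ℝ → ℝ} (hg : Sm g)
    (h0 : ∀ j < r, tcoeff g 0 j = 0) (hc : tcoeff g 0 r ≠ 0) (h11 : tcoeff g 1 1 = 0)
    (h12 : tcoeff g 1 2 ≠ 0) : JE r (MM g) (fun p => (p.1, p.1 * p.2 ^ 2 + p.2 ^ r)) := by
  set a := tcoeff g with ha
  have hr0 : r ≠ 0 := by omega
  let b : ℕ → ℕ → ℝ := fun i j => if i < r then a (i + 1) j else 0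
  have hT : OO (r + 1) (fun p => g p - box (r + 1) a p) := taylor_box (r + 1) hg
  have hbox : ∀ p, box (r + 1) a p = a 0 r * p.2 ^ r + p.1 * box (r + 1) b p := by
    intro p
    have e1 : box (r + 1) b p = ∑ i ∈ Finset.range r, ∑ j ∈ Finset.range (r + 1),
        a (i + 1) j * (p.1 ^ i * p.2 ^ j) := by
      unfold box
      rw [Finset.sum_range_succ (n := r)]
      have : ∑ j ∈ Finset.range (r + 1), b r j * (p.1 ^ r * p.2 ^ j) = 0 :=
        Finset.sum_eq_zero fun j _ => by simp [b]
      rw [this, add_zero]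
      refine Finset.sum_congr rfl fun i hi => Finset.sum_congr rfl fun j _ => ?_
      simp only [b]
      rw [if_pos (Finset.mem_range.1 hi)]
    rw [e1]
    unfold box
    rw [Finset.sum_range_succ' (n := r), add_comm]
    congr 1
    · rw [Finset.sum_eq_single r]
      · simp
      · intro j hj hjr
        rw [h0 j (by have := Finset.mem_range.1 hj; omega)]; simp
      · intro h; exact absurd (Finset.mem_range.2 (by omega)) h
    · simp only [Finset.mul_sum]
      refine Finset.sum_congr rfl fun i _ => Finset.sum_congr rfl fun j _ => ?_
      rw [pow_succ]; ring
  have htb : ∀ i j, i < r → j ≤ r → tcoeff (box (r + 1) b) i j = a (i + 1) j := by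
    intro i j hi hj
    rw [tcoeff_eq, DD_box _ _ _ _ (by omega) (by omega)]
    have h1 : (i.factorial : ℝ) ≠ 0 := by positivity
    have h2 : (j.factorial : ℝ) ≠ 0 := by positivity
    simp only [b, if_pos hi]
    field_simp
  have t01 := htb 0 1 (by omega) (by omega)
  have t02 := htb 0 2 (by omega) (by omega)
  have hbs := box_sm (r + 1) b
  obtain ⟨e, he, heO, hJ⟩ := NF_init (c := a 0 r) hr hbs (by rw [t01]; exact h11)
    (by rw [t02]; exact h12)
  rw [t02] at hJ
  obtain ⟨e', he', heO', hJ'⟩ := NF_steps (N := r) (c := a 0 r) hr (by omega) h12 he heO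
  have hJ'' := NF_final hr h12 hc heO'
  have hs1 : Sm (fun p : ℝ × ℝ => a 0 r * p.2 ^ r + p.1 * box (r + 1) b p) := by
    have hbs' : ContDiff ℝ (⊤ : ℕ∞) (box (r + 1) b) := hbs
    show ContDiff _ _ _
    fun_prop
  have hJ0 : JE r (MM g) (MM (fun p => a 0 r * p.2 ^ r + p.1 * box (r + 1) b p)) := by
    refine JE.comb (w := fun _ => 0) (q := fun _ => 0) contDiff_const contDiff_const rfl
      (by simp [pdy, dop]) rfl ?_
    exact hT.congr fun p => by simp [hbox]
  have hg0 : g 0 = 0 := by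
    have := h0 0 (by omega)
    simpa [ha, tcoeff] using this
  have z1 : MM (fun p => a 0 r * p.2 ^ r + p.1 * box (r + 1) b p) 0 = 0 :=
    MM_zero (by simp [hr0])
  refine hJ0.trans (MM_sm hg) (MM_sm hs1) (MM_zero hg0) z1 ?_
  refine hJ.trans (MM_sm hs1) (MM_sm (NF_sm he)) z1 (MM_zero (NF_zero hr)) ?_
  exact hJ'.trans (MM_sm (NF_sm he)) (MM_sm (NF_sm he')) (MM_zero (NF_zero hr))
    (MM_zero (NF_zero hr)) hJ''


/-! ### One variable chains -/

theorem OO_id : OO 1 (fun t : ℝ => t) := by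
  have : (fun t : ℝ => t) =O[𝓝 0] fun t : ℝ => ‖t‖ ^ 1 := by
    simpa using (isBigO_refl (fun t : ℝ => t) (𝓝 0)).norm_right
  exact this

theorem pow_not_OO {a : ℝ} {i : ℕ} {y : ℝ → ℝ} (hy : (fun t : ℝ => t) =O[𝓝 0] y)
    (h : OO (i + 1) (fun t => a * y t ^ i)) : a = 0 := by
  by_contra ha
  have h1 : (fun t : ℝ => t ^ i) =O[𝓝 0] fun t => a * y t ^ i :=
    (hy.pow i).trans ((isBigO_refl _ _).const_mul_right ha |>.trans (isBigO_refl _ _))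
  have h2 : (fun t : ℝ => t ^ i) =O[𝓝 0] fun t : ℝ => t ^ (i + 1) := by
    refine (h1.trans h).trans (IsBigO.of_bound 1 (Eventually.of_forall fun t => by simp))
  have h3 : (fun t : ℝ => t ^ i) =o[𝓝 0] fun t : ℝ => t ^ i :=
    h2.trans_isLittleO (isLittleO_pow_pow (Nat.lt_succ_self i))
  have h4 : ∃ᶠ t : ℝ in 𝓝 0, t ^ i ≠ 0 := by
    have : ∃ᶠ t : ℝ in 𝓝[≠] 0, t ^ i ≠ 0 := by
      refine Eventually.frequently ?_
      filter_upwards [self_mem_nhdsWithin] with t ht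
      exact pow_ne_zero _ ht
    exact this.filter_mono nhdsWithin_le_nhds
  exact isLittleO_irrefl h4 h3

/-- a chain of functions each the derivative of the previous one near `0` -/
def Chain (μ : ℕ → ℝ → ℝ) : Prop := ∀ i, ∀ᶠ t in 𝓝 (0 : ℝ), HasDerivAt (μ i) (μ (i + 1) t) t

theorem OO_of_hasDerivAt {F : Type*} [NormedAddCommGroup F] [NormedSpace ℝ F] {N : ℕ} {u v : ℝ → F}
    (h0 : u 0 = 0) (hd : ∀ᶠ t in 𝓝 (0 : ℝ), HasDerivAt u (v t) t) (hv : OO N v) :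
    OO (N + 1) u := by
  refine OO.of_fderiv h0 (hd.mono fun t ht => ht.differentiableAt) ?_
  refine IsBigO.trans (IsBigO.of_bound 1 ?_) hv
  filter_upwards [hd] with t ht
  rw [← norm_deriv_eq_norm_fderiv, ht.deriv, one_mul]

theorem Chain.taylor : ∀ (k : ℕ) {μ : ℕ → ℝ → ℝ}, Chain μ → (∀ i < k, μ i 0 = 0) →
    OO (k + 1) (fun t => μ 0 t - μ k 0 / k.factorial * t ^ k) := by
  intro k
  induction k with
  | zero =>
    intro μ hμ _
    have h := (hμ 0).self_of_nhds.differentiableAt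
    refine OO.of_differentiableAt ?_ (by simp)
    simp only [pow_zero, Nat.factorial_zero]
    fun_prop
  | succ k ih =>
    intro μ hμ h
    have h1 := ih (μ := fun i => μ (i + 1)) (fun i => hμ (i + 1))
      (fun i hi => h (i + 1) (by omega))
    have h00 : μ 0 0 = 0 := h 0 (by omega)
    refine OO_of_hasDerivAt (by simp [h00]) ?_ h1
    filter_upwards [hμ 0] with t ht
    have h2 := ((hasDerivAt_pow (k + 1) t).const_mul (μ (k + 1) 0 / (k + 1).factorial))
    have h3 := ht.sub h2
    refine h3.congr_deriv ?_
    have : (k.factorial : ℝ) ≠ 0 := by positivity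
    have : (k + 1 : ℝ) ≠ 0 := by positivity
    rw [Nat.factorial_succ]
    push_cast
    field_simp

theorem Chain.OO_of {k : ℕ} {μ : ℕ → ℝ → ℝ} (hμ : Chain μ) (h : ∀ i < k, μ i 0 = 0) :
    OO k (μ 0) := by
  have h1 := (hμ.taylor k h).mono (Nat.le_succ k)
  have h2 := (OO_id.pow1 k).const_mul (μ k 0 / k.factorial)
  exact (h1.add h2).congr fun t => by ring

theorem Chain.zero_of_comp {k : ℕ} {μ : ℕ → ℝ → ℝ} (hμ : Chain μ) {y : ℝ → ℝ} (hy1 : OO 1 y)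
    (hy : (fun t : ℝ => t) =O[𝓝 0] y) (h : OO k (fun t => μ 0 (y t))) :
    ∀ i < k, μ i 0 = 0 := by
  intro i
  induction i using Nat.strong_induction_on with
  | _ i ih =>
    intro hi
    have h1 := (hμ.taylor i fun j hj => ih j hj (by omega)).comp hy1
    have h2 := (h.mono (show i + 1 ≤ k by omega)).sub h1
    have h3 := pow_not_OO (a := μ i 0 / i.factorial) hy (h2.congr fun t => by ring)
    have : (i.factorial : ℝ) ≠ 0 := by positivity
    simpa [this] using h3

theorem Chain.comp_iff {k : ℕ} {μ : ℕ → ℝ → ℝ} (hμ : Chain μ) {y : ℝ → ℝ} (hy1 : OO 1 y)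
    (hy : (fun t : ℝ => t) =O[𝓝 0] y) :
    OO k (fun t => μ 0 (y t)) ↔ ∀ i < k, μ i 0 = 0 :=
  ⟨hμ.zero_of_comp hy1 hy, fun h => (hμ.OO_of h).comp hy1⟩

theorem Chain.iff {k : ℕ} {μ : ℕ → ℝ → ℝ} (hμ : Chain μ) :
    OO k (μ 0) ↔ ∀ i < k, μ i 0 = 0 :=
  hμ.comp_iff (y := fun t => t) OO_id (isBigO_refl _ _)

theorem chain_pdy {g : ℝ × ℝ → ℝ} (hg : Sm g) : Chain (fun i s => pdy^[i] g (0, s)) := by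
  intro i
  refine Eventually.of_forall fun s => ?_
  have h1 := ((hg.pdy_iter i).diff (0, s)).hasFDerivAt
  have h2 : HasDerivAt (fun s : ℝ => ((0 : ℝ), s)) ((0 : ℝ), (1 : ℝ)) s :=
    (hasDerivAt_const s (0 : ℝ)).prodMk (hasDerivAt_id s)
  have h3 := h1.comp_hasDerivAt s h2
  simp only [Function.iterate_succ_apply']
  exact h3

/-! ### Flow curve -/

theorem etaIter_smooth {η : ℝ × ℝ → ℝ × ℝ} {V : Set (ℝ × ℝ)} (hV : IsOpen V)
    (hη : ContDiffOn ℝ (⊤ : ℕ∞) η V) {u : ℝ × ℝ → ℝ} (hu : Sm u) (k : ℕ) :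
    ContDiffOn ℝ (⊤ : ℕ∞) (etaIter η k u) V := by
  induction k with
  | zero => exact hu.contDiffOn
  | succ k ih =>
    have h1 : ContDiffOn ℝ (⊤ : ℕ∞) (fderiv ℝ (etaIter η k u)) V :=
      ih.fderiv_of_isOpen hV (by simp)
    exact h1.clm_apply hη

theorem exists_curve {η : ℝ × ℝ → ℝ × ℝ} {U : Set (ℝ × ℝ)} (hU : U ∈ 𝓝 0)
    (hη : ContDiffOn ℝ (⊤ : ℕ∞) η U) :
    ∃ γ : ℝ → ℝ × ℝ, γ 0 = 0 ∧ (∀ᶠ t in 𝓝 (0 : ℝ), HasDerivAt γ (η (γ t)) t) ∧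
      ∀ u : ℝ × ℝ → ℝ, Sm u → Chain (fun i t => etaIter η i u (γ t)) := by
  have h1 : ContDiffAt ℝ 1 η 0 := (hη.contDiffAt hU).of_le (by exact_mod_cast le_top)
  obtain ⟨γ, h0, ε, hε, hγ⟩ :=
    h1.exists_forall_mem_closedBall_exists_eq_forall_mem_Ioo_hasDerivAt₀ (0 : ℝ)
  have hd : ∀ᶠ t in 𝓝 (0 : ℝ), HasDerivAt γ (η (γ t)) t := by
    filter_upwards [Ioo_mem_nhds (show (0 : ℝ) - ε < 0 by linarith) (show (0 : ℝ) < 0 + ε by linarith)]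
      with t ht using hγ t ht
  refine ⟨γ, h0, hd, fun u hu i => ?_⟩
  have hc : ContinuousAt γ 0 := hd.self_of_nhds.continuousAt
  have hV : ∀ᶠ t in 𝓝 (0 : ℝ), γ t ∈ interior U := by
    refine hc.eventually ?_
    rw [h0]
    exact isOpen_interior.mem_nhds (mem_interior_iff_mem_nhds.2 hU)
  filter_upwards [hd, hV] with t ht hV
  have h2 := etaIter_smooth isOpen_interior (hη.mono interior_subset) hu i
  have h3 := (h2.contDiffAt (isOpen_interior.mem_nhds hV)).differentiableAt (by simp)
  exact h3.hasFDerivAt.comp_hasDerivAt t ht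


/-! ### Zero set lemma -/

theorem quad_taylor2 {Λ : ℝ × ℝ → ℝ} (hΛ : Sm Λ) (h2 : OO 2 Λ) :
    OO 3 (fun p => Λ p - (tcoeff Λ 2 0 * p.1 ^ 2 + tcoeff Λ 1 1 * (p.1 * p.2)
      + tcoeff Λ 0 2 * p.2 ^ 2)) := by
  refine (quad_taylor hΛ).congr fun p => ?_
  rw [h2.tcoeff hΛ 0 0 (by norm_num), h2.tcoeff hΛ 1 0 (by norm_num),
    h2.tcoeff hΛ 0 1 (by norm_num)]
  ring

theorem OO.exists_ball {N : ℕ} {u : ℝ × ℝ → ℝ} (h : OO N u) :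
    ∃ C > 0, ∃ ε > 0, ∀ p : ℝ × ℝ, ‖p‖ < ε → |u p| ≤ C * ‖p‖ ^ N := by
  obtain ⟨C, hC0, hC⟩ := h.exists_pos
  obtain ⟨ε, hε, hball⟩ := Metric.eventually_nhds_iff_ball.1 hC.bound
  refine ⟨C, hC0, ε, hε, fun p hp => ?_⟩
  simpa using hball p (mem_ball_zero_iff.2 hp)

theorem norm_of_cone {x y : ℝ} (h : |x| ≤ |y|) : ‖(x, y)‖ = |y| := by
  rw [Prod.norm_mk]; simpa using h

theorem norm_of_zero_snd (x : ℝ) : ‖(x, (0 : ℝ))‖ = |x| := by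
  rw [Prod.norm_mk]; simp

theorem zero_set {Λ : ℝ × ℝ → ℝ} (hΛ : Sm Λ) (h2 : OO 2 Λ) (h02 : tcoeff Λ 0 2 = 0)
    (h11 : tcoeff Λ 1 1 ≠ 0) {H : ℝ × ℝ → ℝ × ℝ} (hH : ContDiffAt ℝ 1 H 0)
    (hz : ∀ᶠ p in 𝓝 (0 : ℝ × ℝ), Λ p = 0 → H p = 0) :
    ∃ δ > 0, ∃ ε > 0, ∃ K, ∀ x y : ℝ, |x| ≤ δ * |y| → |y| < ε →
      |y| * ‖H (x, y)‖ ≤ K * |Λ (x, y)| := by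
  set a := tcoeff Λ 2 0 with ha
  set b := tcoeff Λ 1 1 with hb
  have hb0 : 0 < |b| := abs_pos.2 h11
  have hT := quad_taylor2 hΛ h2
  rw [← ha, ← hb, h02] at hT
  -- the x derivative
  have hsm : Sm (fun p : ℝ × ℝ => Λ p - (a * p.1 ^ 2 + b * (p.1 * p.2) + 0 * p.2 ^ 2)) := by
    refine ContDiff.sub hΛ ?_
    fun_prop
  have hTx := hT.pdx hsm
  have hTx' : OO 2 (fun p => pdx Λ p - (2 * a * p.1 + b * p.2)) := by
    refine hTx.congr fun p => ?_
    have h1 : HasFDerivAt (fun q : ℝ × ℝ => q.1) (ContinuousLinearMap.fst ℝ ℝ ℝ) p := hasFDerivAt_fst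
    have h2 : HasFDerivAt (fun q : ℝ × ℝ => q.2) (ContinuousLinearMap.snd ℝ ℝ ℝ) p := hasFDerivAt_snd
    have h3 := ((hΛ.diff p).hasFDerivAt).sub ((((h1.pow 2).const_mul a).add
      ((h1.mul h2).const_mul b)).add ((h2.pow 2).const_mul 0))
    simp only [pdx, dop]
    erw [h3.fderiv]
    simp
    ring
  obtain ⟨C1, hC1, ε1, hε1, hB1⟩ := hT.exists_ball
  obtain ⟨C2, hC2, ε2, hε2, hB2⟩ := hTx'.exists_ball
  obtain ⟨L, s, hs, hL⟩ := hH.exists_lipschitzOnWith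
  obtain ⟨ε3, hε3, hB3⟩ := Metric.eventually_nhds_iff_ball.1 (hz.and hs)
  obtain ⟨δ, hδ0, hδ1, hδa⟩ : ∃ δ : ℝ, 0 < δ ∧ δ ≤ 1 ∧ δ * (8 * |a|) ≤ |b| := by
    refine ⟨min 1 (|b| / (8 * |a| + 1)), by positivity, min_le_left _ _, ?_⟩
    have h8 : 0 ≤ 8 * |a| := by positivity
    calc _ ≤ |b| / (8 * |a| + 1) * (8 * |a|) := by gcongr; exact min_le_right _ _
      _ ≤ |b| := by
        rw [div_mul_eq_mul_div, div_le_iff₀ (by positivity)]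
        nlinarith
  obtain ⟨ε, hε0, he1, he2, he3, he4, he5⟩ : ∃ ε : ℝ, 0 < ε ∧ ε ≤ ε1 ∧ ε ≤ ε2 ∧ ε ≤ ε3 ∧
      C1 * ε ≤ δ * |b| / 4 ∧ C2 * ε ≤ |b| / 4 := by
    refine ⟨min (min ε1 (min ε2 ε3)) (min (δ * |b| / 4 / C1) (|b| / 4 / C2)), by positivity,
      ?_, ?_, ?_, ?_, ?_⟩
    · exact (min_le_left _ _).trans (min_le_left _ _)
    · exact (min_le_left _ _).trans ((min_le_right _ _).trans (min_le_left _ _))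
    · exact (min_le_left _ _).trans ((min_le_right _ _).trans (min_le_right _ _))
    · have : min (min ε1 (min ε2 ε3)) (min (δ * |b| / 4 / C1) (|b| / 4 / C2)) ≤ δ * |b| / 4 / C1 :=
        (min_le_right _ _).trans (min_le_left _ _)
      rwa [le_div_iff₀ hC1, mul_comm] at this
    · have : min (min ε1 (min ε2 ε3)) (min (δ * |b| / 4 / C1) (|b| / 4 / C2)) ≤ |b| / 4 / C2 :=
        (min_le_right _ _).trans (min_le_right _ _)
      rwa [le_div_iff₀ hC2, mul_comm] at this
  refine ⟨δ, hδ0, ε, hε0, 2 * L / |b|, fun x y hxy hy => ?_⟩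
  rcases eq_or_ne y 0 with rfl | hy0
  · simp only [abs_zero, zero_mul]; positivity
  have hyp : 0 < |y| := abs_pos.2 hy0
  have cone : ∀ x, |x| ≤ δ * |y| → ‖(x, y)‖ = |y| := fun x hx =>
    norm_of_cone (hx.trans (by nlinarith))
  have key1 : ∀ x, |x| ≤ δ * |y| → |Λ (x, y) - b * (x * y)| ≤ δ * |b| / 2 * |y| ^ 2 := by
    intro x hx
    have h1 := hB1 (x, y) (by rw [cone x hx]; linarith)
    rw [cone x hx] at h1
    have e : Λ (x, y) - b * (x * y) =
      (Λ (x, y) - (a * x ^ 2 + b * (x * y) + 0 * y ^ 2)) + a * x ^ 2 := by ring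
    rw [e]
    refine (abs_add_le _ _).trans ?_
    have h2 : |a * x ^ 2| ≤ δ * |b| / 8 * |y| ^ 2 := by
      rw [abs_mul, abs_pow]
      have : |x| ^ 2 ≤ (δ * |y|) ^ 2 := by gcongr
      calc |a| * |x| ^ 2 ≤ |a| * (δ * |y|) ^ 2 := by gcongr
        _ = (δ * (8 * |a|)) * (δ / 8 * |y| ^ 2) := by ring
        _ ≤ |b| * (δ / 8 * |y| ^ 2) := by gcongr
        _ = _ := by ring
    have h3 : C1 * |y| ^ 3 ≤ δ * |b| / 4 * |y| ^ 2 := by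
      calc C1 * |y| ^ 3 = C1 * |y| * |y| ^ 2 := by ring
        _ ≤ C1 * ε * |y| ^ 2 := by gcongr
        _ ≤ _ := by gcongr
    have h4 : 0 ≤ δ * |b| * |y| ^ 2 := by positivity
    simp only at h1
    linarith
  have key2 : ∀ x, |x| ≤ δ * |y| → |b| / 2 * |y| ≤ |pdx Λ (x, y)| := by
    intro x hx
    have h1 := hB2 (x, y) (by rw [cone x hx]; linarith)
    rw [cone x hx] at h1
    simp only at h1
    have h2 : |2 * a * x| ≤ |b| / 4 * |y| := by
      rw [abs_mul, abs_mul, abs_two]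
      calc 2 * |a| * |x| ≤ 2 * |a| * (δ * |y|) := by gcongr
        _ = (δ * (8 * |a|)) * (|y| / 4) := by ring
        _ ≤ |b| * (|y| / 4) := by gcongr
        _ = _ := by ring
    have h3 : C2 * |y| ^ 2 ≤ |b| / 4 * |y| := by
      calc C2 * |y| ^ 2 = C2 * |y| * |y| := by ring
        _ ≤ C2 * ε * |y| := by gcongr
        _ ≤ _ := by gcongr
    have h5 : |b * y| = |b| * |y| := abs_mul _ _
    have h6 : |b * y| ≤ |pdx Λ (x, y)| + |pdx Λ (x, y) - (2 * a * x + b * y)| + |2 * a * x| := by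
      have e : b * y = pdx Λ (x, y) - (pdx Λ (x, y) - (2 * a * x + b * y)) - 2 * a * x := by ring
      conv_lhs => rw [e]
      exact (abs_sub _ _).trans (by gcongr; exact abs_sub _ _)
    linarith
  -- zero in the cone
  have hcont : Continuous (fun s : ℝ => Λ (s, y)) := hΛ.continuous.comp (by fun_prop)
  obtain ⟨s0, hs0, hs0'⟩ : ∃ s0, |s0| ≤ δ * |y| ∧ Λ (s0, y) = 0 := by
    have hp : abs (δ * |y|) ≤ δ * |y| := by rw [abs_of_nonneg (by positivity)]
    have hn : abs (-(δ * |y|)) ≤ δ * |y| := by rw [abs_neg]; exact hp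
    have k1 := key1 _ hp
    have k2 := key1 _ hn
    rw [abs_le] at k1 k2
    have himg := intermediate_value_uIcc (a := -(δ * |y|)) (b := δ * |y|)
      (f := fun s : ℝ => Λ (s, y)) hcont.continuousOn
    have h0 : (0 : ℝ) ∈ Set.uIcc (Λ (-(δ * |y|), y)) (Λ (δ * |y|, y)) := by
      rw [Set.mem_uIcc]
      have h4 : 0 ≤ δ * |b| * |y| ^ 2 := by positivity
      rcases le_total 0 (b * y) with h | h
      · left
        have h5 : b * y = |b| * |y| := by rw [← abs_mul, abs_of_nonneg h]
        have h6 : b * (δ * |y| * y) = δ * |b| * |y| ^ 2 := by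
          linear_combination (δ * |y|) * h5
        have h7 : b * (-(δ * |y|) * y) = - (δ * |b| * |y| ^ 2) := by
          linear_combination (-δ * |y|) * h5
        constructor <;> linarith [k1.1, k1.2, k2.1, k2.2]
      · right
        have h5 : b * y = - (|b| * |y|) := by rw [← abs_mul, abs_of_nonpos h]; ring
        have h6 : b * (δ * |y| * y) = - (δ * |b| * |y| ^ 2) := by
          linear_combination (δ * |y|) * h5
        have h7 : b * (-(δ * |y|) * y) = (δ * |b| * |y| ^ 2) := by
          linear_combination (-δ * |y|) * h5
        constructor <;> linarith [k1.1, k1.2, k2.1, k2.2]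
    obtain ⟨s0, hs, hs'⟩ := himg h0
    refine ⟨s0, ?_, hs'⟩
    rw [Set.uIcc_of_le (by nlinarith)] at hs
    exact abs_le.2 hs
  -- mean value theorem
  have hmv : |b| / 2 * |y| * |x - s0| ≤ |Λ (x, y)| := by
    have hder : ∀ s, HasDerivAt (fun s : ℝ => Λ (s, y)) (pdx Λ (s, y)) s := by
      intro s
      have h2 : HasDerivAt (fun s : ℝ => (s, y)) ((1 : ℝ), (0 : ℝ)) s :=
        (hasDerivAt_id s).prodMk (hasDerivAt_const s y)
      exact (hΛ.diff (s, y)).hasFDerivAt.comp_hasDerivAt s h2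
    have main : ∃ ξ, |ξ| ≤ δ * |y| ∧ Λ (x, y) - Λ (s0, y) = pdx Λ (ξ, y) * (x - s0) := by
      rw [abs_le] at hxy hs0
      rcases lt_trichotomy x s0 with h | h | h
      · obtain ⟨ξ, hξ, h'⟩ := exists_hasDerivAt_eq_slope (fun s : ℝ => Λ (s, y))
          (fun s => pdx Λ (s, y)) h hcont.continuousOn (fun s _ => hder s)
        refine ⟨ξ, abs_le.2 ⟨by linarith [hξ.1, hξ.2, hxy.1], by linarith [hξ.2, hs0.2]⟩, ?_⟩
        have : s0 - x ≠ 0 := by linarith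
        rw [h']
        field_simp
        ring
      · exact ⟨x, abs_le.2 hxy, by simp [h]⟩
      · obtain ⟨ξ, hξ, h'⟩ := exists_hasDerivAt_eq_slope (fun s : ℝ => Λ (s, y))
          (fun s => pdx Λ (s, y)) h hcont.continuousOn (fun s _ => hder s)
        refine ⟨ξ, abs_le.2 ⟨by linarith [hξ.1, hξ.2, hs0.1], by linarith [hξ.2, hxy.2]⟩, ?_⟩
        have : x - s0 ≠ 0 := by linarith
        rw [h']
        field_simp
    obtain ⟨ξ, hξ, h'⟩ := main
    rw [hs0', sub_zero] at h'
    rw [h', abs_mul]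
    gcongr
    exact key2 ξ hξ
  have m1 : (x, y) ∈ Metric.ball (0 : ℝ × ℝ) ε3 :=
    mem_ball_zero_iff.2 (by rw [cone x hxy]; linarith)
  have m2 : (s0, y) ∈ Metric.ball (0 : ℝ × ℝ) ε3 :=
    mem_ball_zero_iff.2 (by rw [cone s0 hs0]; linarith)
  have hH0 : H (s0, y) = 0 := (hB3 _ m2).1 hs0'
  have hlip := hL.dist_le_mul _ (hB3 _ m1).2 _ (hB3 _ m2).2
  rw [hH0, dist_zero_right, dist_eq_norm] at hlip
  have e : (x, y) - (s0, y) = (x - s0, (0 : ℝ)) := by ext <;> simp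
  rw [e, norm_of_zero_snd] at hlip
  calc |y| * ‖H (x, y)‖ ≤ |y| * (L * |x - s0|) := by gcongr
    _ = 2 * L / |b| * (|b| / 2 * |y| * |x - s0|) := by field_simp
    _ ≤ _ := by gcongr


/-! ### Comparison along the flow curve -/

theorem core {Λ g : ℝ × ℝ → ℝ} {m : ℕ} (hΛ : Sm Λ) (hg : Sm g)
    (hΛg : OO (m + 1) (fun p => Λ p - pdy g p)) (hgy : OO 2 (pdy g))
    (h2 : OO 2 Λ) (h02 : tcoeff Λ 0 2 = 0) (h11 : tcoeff Λ 1 1 ≠ 0)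
    {H : ℝ × ℝ → ℝ × ℝ} (hH : ContDiffAt ℝ 1 H 0)
    (hz : ∀ᶠ p in 𝓝 (0 : ℝ × ℝ), Λ p = 0 → H p = 0)
    {c β : ℝ → ℝ × ℝ} (hc1 : OO 1 c) (hx : (fun t => (c t).1) =o[𝓝 0] fun t : ℝ => t)
    (hy : (fun t : ℝ => t) =O[𝓝 0] fun t => (c t).2) (hβ0 : β 0 = 0)
    (hβ : ∀ᶠ t in 𝓝 (0 : ℝ), HasDerivAt β (H (c t)) t)
    (hxβ : ∀ k ≤ m, OO k β → OO k (fun t => (c t).1))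
    (hor : OO m (fun t => Λ (c t)) ∨ OO m (fun s => pdy g ((0 : ℝ), s))) :
    OO (m + 1) (fun t => Λ (c t) - pdy g (0, (c t).2)) := by
  have hy1 : OO 1 (fun t => (c t).2) := hc1.snd
  have hu : OO 1 (fun t => ((0 : ℝ), (c t).2)) :=
    OO.prodMk (u := fun _ => (0 : ℝ)) (isBigO_zero _ _) hy1
  have hA : OO (m + 1) (fun t => Λ (c t) - pdy g (c t)) := hΛg.comp hc1
  have hgd : OO 1 (fun p => fderiv ℝ (pdy g) p) := hgy.fderiv_of_sm hg.pdy
  have hB : ∀ k, OO k (fun t => (c t).1) →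
      OO (1 + k) (fun t => pdy g (c t) - pdy g (0, (c t).2)) := by
    intro k hk
    refine OO.comp_sub_order (Eventually.of_forall fun p => hg.pdy.diff p) hgd hc1 hu ?_
    refine (OO.prodMk hk (v := fun _ => (0 : ℝ)) (isBigO_zero _ _)).congr fun t => ?_
    ext <;> simp
  obtain ⟨δ, hδ, ε, hε, K, hK⟩ := zero_set hΛ h2 h02 h11 hH hz
  have hzz : ∀ᶠ t in 𝓝 (0 : ℝ), |(c t).2| * ‖H (c t)‖ ≤ K * |Λ (c t)| := by
    have e1 : (fun t => (c t).1) =o[𝓝 0] fun t => (c t).2 := hx.trans_isBigO hy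
    have e2 := e1.bound hδ
    have e3 : Tendsto (fun t => (c t).2) (𝓝 0) (𝓝 0) := OO.tendsto (N := 0) hy1
    filter_upwards [e2, e3 (Metric.ball_mem_nhds 0 hε)] with t h1 h2
    exact hK _ _ (by simpa using h1) (by simpa using h2)
  have hH0 : H (c 0) = 0 := by
    have h1 : c 0 = 0 := OO.zero_at (N := 0) hc1
    rw [h1]
    exact hz.self_of_nhds (OO.zero_at (N := 1) h2)
  have hstep : ∀ k, OO (k + 1) (fun t => Λ (c t)) → OO (k + 1) β := by
    intro k hk
    refine OO_of_hasDerivAt hβ0 hβ ?_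
    obtain ⟨A, hA0, hA⟩ := hk.exists_nonneg
    obtain ⟨B, hB0, hB⟩ := hy.exists_pos
    refine IsBigO.of_bound (B * (|K| * A)) ?_
    filter_upwards [hzz, hA.bound, hB.bound] with t t1 t2 t3
    rw [norm_pow, norm_norm] at t2 ⊢
    simp only [Real.norm_eq_abs] at t2 t3 ⊢
    rcases eq_or_ne t 0 with rfl | ht
    · rw [hH0, norm_zero]; positivity
    have htp : 0 < |t| := abs_pos.2 ht
    refine le_of_mul_le_mul_left ?_ htp
    calc |t| * ‖H (c t)‖ ≤ B * |(c t).2| * ‖H (c t)‖ := by gcongr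
      _ = B * (|(c t).2| * ‖H (c t)‖) := by ring
      _ ≤ B * (K * |Λ (c t)|) := by gcongr
      _ ≤ B * (|K| * (A * |t| ^ (k + 1))) := by
        gcongr
        exact le_abs_self K
      _ = _ := by ring
  have hall : ∀ k ≤ m, OO k β := by
    intro k
    induction k with
    | zero => intro _; exact OO.of_continuousAt hβ.self_of_nhds.continuousAt
    | succ k ih =>
      intro hk
      apply hstep
      rcases hor with h | h
      · exact h.mono hk
      · have h3 := hB k (hxβ k (by omega) (ih (by omega)))
        have h4 : OO m (fun t => pdy g (0, (c t).2)) := h.comp hy1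
        refine (((hA.mono (show k + 1 ≤ m + 1 by omega)).add (h3.mono (by omega))).add
          (h4.mono hk)).congr fun t => by ring
  have h5 := hB m (hxβ m le_rfl (hall m le_rfl))
  exact (hA.add (h5.mono (by omega))).congr fun t => by ring

theorem core_iff {Λ g : ℝ × ℝ → ℝ} {m : ℕ} (hΛ : Sm Λ) (hg : Sm g)
    (hΛg : OO (m + 1) (fun p => Λ p - pdy g p)) (hgy : OO 2 (pdy g))
    (h2 : OO 2 Λ) (h02 : tcoeff Λ 0 2 = 0) (h11 : tcoeff Λ 1 1 ≠ 0)
    {H : ℝ × ℝ → ℝ × ℝ} (hH : ContDiffAt ℝ 1 H 0)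
    (hz : ∀ᶠ p in 𝓝 (0 : ℝ × ℝ), Λ p = 0 → H p = 0)
    {c β : ℝ → ℝ × ℝ} (hc1 : OO 1 c) (hx : (fun t => (c t).1) =o[𝓝 0] fun t : ℝ => t)
    (hy : (fun t : ℝ => t) =O[𝓝 0] fun t => (c t).2) (hβ0 : β 0 = 0)
    (hβ : ∀ᶠ t in 𝓝 (0 : ℝ), HasDerivAt β (H (c t)) t)
    (hxβ : ∀ k ≤ m, OO k β → OO k (fun t => (c t).1)) :
    (OO m (fun t => Λ (c t)) ∧ ¬ OO (m + 1) (fun t => Λ (c t))) ↔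
      ((∀ j, j ≤ m → 1 ≤ j → tcoeff g 0 j = 0) ∧ tcoeff g 0 (m + 1) ≠ 0) := by
  have hy1 : OO 1 (fun t => (c t).2) := hc1.snd
  have hch := chain_pdy hg.pdy
  have hcomp := fun k => hch.comp_iff (k := k) hy1 hy
  have hself := fun k => hch.iff (k := k)
  have hcore := core hΛ hg hΛg hgy h2 h02 h11 hH hz hc1 hx hy hβ0 hβ hxβ
  simp only [Function.iterate_zero, id] at hcomp hself
  have htc : ∀ j, tcoeff g 0 (j + 1) = 0 ↔ pdy^[j] (pdy g) (0, 0) = 0 := by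
    intro j
    have : ((j + 1).factorial : ℝ) ≠ 0 := by positivity
    rw [tcoeff, div_eq_zero_iff]
    simp only [Function.iterate_zero, id, Function.iterate_succ_apply]
    simp only [Nat.factorial_zero, Nat.cast_one, one_mul, this, or_false]
    rfl
  have hco : ∀ k, (∀ j, j ≤ k → 1 ≤ j → tcoeff g 0 j = 0) ↔
      ∀ i < k, pdy^[i] (pdy g) (0, 0) = 0 := by
    intro k
    constructor
    · intro h i hi
      exact (htc i).1 (h (i + 1) (by omega) (by omega))
    · intro h j hj hj1
      obtain ⟨i, rfl⟩ : ∃ i, j = i + 1 := ⟨j - 1, by omega⟩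
      exact (htc i).2 (h i (by omega))
  rw [hco, Ne, htc]
  have e1 : OO m (fun t => Λ (c t)) ↔ ∀ i < m, pdy^[i] (pdy g) (0, 0) = 0 := by
    constructor
    · intro h
      rw [← hcomp m]
      exact (h.sub ((hcore (Or.inl h)).mono (Nat.le_succ m))).congr fun t => by ring
    · intro h
      have h' := (hself m).2 h
      exact (((hcore (Or.inr h')).mono (Nat.le_succ m)).add ((hcomp m).2 h)).congr
        fun t => by ring
  rw [← e1]
  refine and_congr_right fun h => not_congr ?_
  have h' := hcore (Or.inl h)
  have e2 : OO (m + 1) (fun t => Λ (c t)) ↔ OO (m + 1) (fun t => pdy g (0, (c t).2)) :=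
    ⟨fun k => (k.sub h').congr fun t => by ring, fun k => (k.add h').congr fun t => by ring⟩
  rw [e2, hcomp]
  constructor
  · intro k; exact k m (by omega)
  · intro k i hi
    rcases Nat.lt_succ_iff_lt_or_eq.1 hi with h1 | rfl
    · exact (e1.1 h) i h1
    · exact k


/-! ### Transfer between coordinates -/

theorem inv_exists {φ : ℝ × ℝ → ℝ × ℝ} (hφ : Sm φ) (h0 : φ 0 = 0) (hj : jacDet φ 0 ≠ 0) :
    ∃ χ : ℝ × ℝ → ℝ × ℝ, OO 1 χ ∧ ∀ᶠ p in 𝓝 (0 : ℝ × ℝ), φ (χ p) = p := by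
  have hb := (bij_jac φ).2 hj
  let L : (ℝ × ℝ) ≃L[ℝ] (ℝ × ℝ) := ContinuousLinearEquiv.ofBijective (fderiv ℝ φ 0)
    (LinearMap.ker_eq_bot.2 hb.1) (LinearMap.range_eq_top.2 hb.2)
  have hL : (L : ℝ × ℝ →L[ℝ] ℝ × ℝ) = fderiv ℝ φ 0 := by ext <;> rfl
  have hs : HasStrictFDerivAt φ (L : ℝ × ℝ →L[ℝ] ℝ × ℝ) 0 := by
    rw [hL]
    exact hφ.contDiffAt.hasStrictFDerivAt (by simp)
  refine ⟨hs.localInverse φ L 0, ?_, ?_⟩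
  · refine OO.of_differentiableAt ?_ ?_
    · have := hs.to_localInverse.hasFDerivAt.differentiableAt
      rwa [h0] at this
    · have := hs.localInverse_apply_image
      rwa [h0] at this
  · have := hs.eventually_right_inverse
    rwa [h0] at this

section transfer
variable {f φ ψ : ℝ × ℝ → ℝ × ℝ}

def ww (f φ ψ : ℝ × ℝ → ℝ × ℝ) : ℝ × ℝ → ℝ := fun p => jacDet ψ (f (φ p)) * jacDet φ p

theorem ww_sm (hf : Sm f) (hφ : Sm φ) (hψ : Sm ψ) : Sm (ww f φ ψ) :=
  ((jacDet_sm hψ).comp (hf.comp hφ)).mul (jacDet_sm hφ)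

theorem jac_ww (hf : Sm f) (hφ : Sm φ) (hψ : Sm ψ) (p : ℝ × ℝ) :
    jacDet (fun p => ψ (f (φ p))) p = ww f φ ψ p * jacDet f (φ p) := by
  have hF : Sm (fun p => f (φ p)) := hf.comp hφ
  have e1 := jacDet_comp (f := fun p => f (φ p)) (g := ψ) (p := p) (hψ.diff _) (hF.diff _)
  have e2 := jacDet_comp (f := φ) (g := f) (p := p) (hf.diff _) (hφ.diff _)
  rw [e1, e2, ww]; ring

theorem jac_close {F : ℝ × ℝ → ℝ × ℝ} {g : ℝ × ℝ → ℝ} {r : ℕ} (hF : Sm F) (hg : Sm g)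
    (h : OO (r + 1) (fun p => F p - MM g p)) : OO r (fun p => jacDet F p - pdy g p) := by
  have h1 : OO (r + 1) (fun p => (F p).1 - p.1) := h.fst
  have h2 : OO (r + 1) (fun p => (F p).2 - g p) := h.snd
  have s1 : Sm (fun p => (F p).1 - p.1) := hF.fst.sub contDiff_fst
  have s2 : Sm (fun p => (F p).2 - g p) := hF.snd.sub hg
  have e1 : (fun p => (F p).1) = fun p => ((F p).1 - p.1) + p.1 := by funext p; ring
  have e2 : (fun p => (F p).2) = fun p => ((F p).2 - g p) + g p := by funext p; ring
  have a1 : ∀ p, pdx (fun p => (F p).1) p = pdx (fun p => (F p).1 - p.1) p + 1 := by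
    intro p
    have := congrFun (pdx_add s1 contDiff_fst) p
    rw [← e1] at this
    rw [this, pdx_fst]
  have a2 : ∀ p, pdy (fun p => (F p).1) p = pdy (fun p => (F p).1 - p.1) p := by
    intro p
    have := congrFun (pdy_add s1 contDiff_fst) p
    rw [← e1] at this
    rw [this, pdy_fst, add_zero]
  have a4 : ∀ p, pdy (fun p => (F p).2) p = pdy (fun p => (F p).2 - g p) p + pdy g p := by
    intro p
    have := congrFun (pdy_add s2 hg) p
    rw [← e2] at this
    rw [this]
  have o1 := h1.pdx s1
  have o2 := h1.pdy s1
  have o4 := h2.pdy s2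
  have sF2 : Sm (fun p => (F p).2) := hF.snd
  have sF1 : Sm (fun p => (F p).1) := hF.fst
  have t1 := OO.mul_left hg.pdy.continuous.continuousAt o1
  have t2 := OO.mul_left sF1.pdx.continuous.continuousAt o4
  have t3 := OO.mul_left sF2.pdx.continuous.continuousAt o2
  refine ((t1.add t2).sub t3).congr fun p => ?_
  rw [jacDet_eq hF, a1, a2, a4]
  ring

theorem OO_unit_iff {E : Type*} [NormedAddCommGroup E] {k : ℕ} {w u v : E → ℝ}
    (hw : ContinuousAt w 0) (hw0 : w 0 ≠ 0) (h : ∀ᶠ p in 𝓝 0, v p = w p * u p) :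
    OO k v ↔ OO k u := by
  constructor
  · intro hv
    have h1 : OO k (fun p => (w p)⁻¹ * v p) := OO.mul_left (hw.inv₀ hw0) hv
    refine IsBigO.congr' h1 ?_ EventuallyEq.rfl
    filter_upwards [h, hw.eventually_ne hw0] with p hp hp'
    rw [hp]; field_simp
  · intro hu
    have h1 : OO k (fun p => w p * u p) := OO.mul_left hw hu
    exact IsBigO.congr' h1 (h.mono fun p hp => hp.symm) EventuallyEq.rfl

theorem OO_jac_iff (hf : Sm f) (hφ : Sm φ) (hψ : Sm ψ) (hf0 : f 0 = 0) (hφ0 : φ 0 = 0)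
    (hφj : jacDet φ 0 ≠ 0) (hψj : jacDet ψ 0 ≠ 0) (k : ℕ) :
    OO k (jacDet (fun p => ψ (f (φ p)))) ↔ OO k (jacDet f) := by
  have hw0 : ww f φ ψ 0 ≠ 0 := by
    simp only [ww, hφ0, hf0]; exact mul_ne_zero hψj hφj
  rw [OO_unit_iff (u := fun p => jacDet f (φ p)) (ww_sm hf hφ hψ).continuous.continuousAt hw0
    (Eventually.of_forall fun p => jac_ww hf hφ hψ p)]
  obtain ⟨χ, hχ, hχ'⟩ := inv_exists hφ hφ0 hφj
  constructor
  · intro h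
    refine IsBigO.congr' (h.comp hχ) ?_ EventuallyEq.rfl
    filter_upwards [hχ'] with p hp
    rw [hp]
  · intro h
    exact h.comp (hφ.OO1 hφ0)

theorem OO2_iff {u : ℝ × ℝ → ℝ} (hu : Sm u) : OO 2 u ↔ u 0 = 0 ∧ fderiv ℝ u 0 = 0 := by
  constructor
  · intro h
    refine ⟨OO.zero_at (N := 1) h, ?_⟩
    exact OO.zero_at (N := 0) (h.fderiv_of_sm hu)
  · rintro ⟨h0, h1⟩
    refine OO.of_pd hu h0 ?_ ?_
    · exact hu.pdx.OO1 (by simp [pdx, dop, h1])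
    · exact hu.pdy.OO1 (by simp [pdy, dop, h1])

theorem hess_det {u : ℝ × ℝ → ℝ} (hu : Sm u) :
    (hess u).det = 4 * tcoeff u 2 0 * tcoeff u 0 2 - tcoeff u 1 1 ^ 2 := by
  have h := congrFun (pdx_pdy hu) 0
  rw [hess, Matrix.det_fin_two_of, ← h]
  simp only [tcoeff, Function.iterate_succ_apply, Function.iterate_zero, id]
  norm_num [Nat.factorial]
  ring

theorem lin_taylor {u : ℝ × ℝ → ℝ} (hu : Sm u) (h0 : u 0 = 0) :
    OO 2 (fun p => u p - (pdx u 0 * p.1 + pdy u 0 * p.2)) := by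
  have h := taylor_box 2 hu
  have h1 := OO_mon (i := 1) (j := 1) (N := 2) (tcoeff u 1 1) (by norm_num)
  refine (h.add h1).congr fun p => ?_
  simp only [box, Finset.sum_range_succ, Finset.sum_range_zero, tcoeff, Function.iterate_succ_apply,
    Function.iterate_zero, id, h0]
  norm_num [Nat.factorial]
  ring

theorem quad_unique {a b c : ℝ} {u : ℝ × ℝ → ℝ} (hu : Sm u)
    (h : OO 3 (fun p => u p - (a * p.1 ^ 2 + b * (p.1 * p.2) + c * p.2 ^ 2))) :
    tcoeff u 2 0 = a ∧ tcoeff u 1 1 = b ∧ tcoeff u 0 2 = c := by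
  have hh : OO 3 (fun p => u p - (mnm a 2 0 p + (mnm b 1 1 p + mnm c 0 2 p))) :=
    h.congr fun p => by simp only [mnm]; ring
  have s1 := (mnm_sm b 1 1).add (mnm_sm c 0 2)
  have s := (mnm_sm a 2 0).add s1
  have key : ∀ i j, i + j < 3 → DD i j u = DD i j (mnm a 2 0) + (DD i j (mnm b 1 1)
      + DD i j (mnm c 0 2)) := by
    intro i j hij
    have h1 := hh.DD (hu.sub s) i j hij
    rw [DD_sub hu s, DD_add (mnm_sm a 2 0) s1, DD_add (mnm_sm b 1 1) (mnm_sm c 0 2)] at h1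
    linarith
  have k1 := key 2 0 (by norm_num)
  have k2 := key 1 1 (by norm_num)
  have k3 := key 0 2 (by norm_num)
  simp only [DD_mnm] at k1 k2 k3
  norm_num [Nat.factorial] at k1 k2 k3
  simp only [tcoeff_eq, k1, k2, k3]
  norm_num [Nat.factorial]

theorem hess_transfer (hf : Sm f) (hφ : Sm φ) (hψ : Sm ψ) (hf0 : f 0 = 0) (hφ0 : φ 0 = 0)
    (hφj : jacDet φ 0 ≠ 0) (hψj : jacDet ψ 0 ≠ 0) (h2 : OO 2 (jacDet f)) :
    (hess (jacDet (fun p => ψ (f (φ p))))).det < 0 ↔ (hess (jacDet f)).det < 0 := by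
  have hF : Sm (fun p => ψ (f (φ p))) := hψ.comp (hf.comp hφ)
  rw [hess_det (jacDet_sm hF), hess_det (jacDet_sm hf)]
  have hj := jacDet_sm hf
  have hq := quad_taylor2 hj h2
  set A := tcoeff (jacDet f) 2 0
  set B := tcoeff (jacDet f) 1 1
  set C := tcoeff (jacDet f) 0 2
  have s1 : Sm (fun p => (φ p).1) := hφ.fst
  have s2 : Sm (fun p => (φ p).2) := hφ.snd
  have l1 := lin_taylor s1 (by simp [hφ0])
  have l2 := lin_taylor s2 (by simp [hφ0])
  have hdet := jacDet_eq hφ 0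
  set a := pdx (fun p => (φ p).1) 0
  set b := pdy (fun p => (φ p).1) 0
  set c := pdx (fun p => (φ p).2) 0
  set d := pdy (fun p => (φ p).2) 0
  have hw := ww_sm hf hφ hψ
  have hw0 : ww f φ ψ 0 ≠ 0 := by
    simp only [ww, hφ0, hf0]; exact mul_ne_zero hψj hφj
  have q1 := hq.comp (hφ.OO1 hφ0)
  have o1 : OO 1 (fun p => (φ p).1) := s1.OO1 (by simp [hφ0])
  have o2 : OO 1 (fun p => (φ p).2) := s2.OO1 (by simp [hφ0])
  have oL1 : OO 1 (fun p : ℝ × ℝ => a * p.1 + b * p.2) :=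
    (OO_fst.const_mul a).add (OO_snd.const_mul b)
  have oL2 : OO 1 (fun p : ℝ × ℝ => c * p.1 + d * p.2) :=
    (OO_fst.const_mul c).add (OO_snd.const_mul d)
  -- the quadratic form in the new coordinates
  have d1 := (l1.mul (o1.add oL1)).const_mul A
  have d2 := (l1.mul o2).const_mul B
  have d3 := (oL1.mul l2).const_mul B
  have d4 := (l2.mul (o2.add oL2)).const_mul C
  have q2 : OO 3 (fun p => jacDet f (φ p) - (A * (a * p.1 + b * p.2) ^ 2
      + B * ((a * p.1 + b * p.2) * (c * p.1 + d * p.2)) + C * (c * p.1 + d * p.2) ^ 2)) := by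
    refine ((((q1.add d1).add d2).add (d3.mono (by norm_num))).add d4).congr fun p => ?_
    ring
  have ow : OO 1 (fun p => ww f φ ψ p - ww f φ ψ 0) :=
    Sm.OO1 (hw.sub contDiff_const) (by simp)
  have oq : OO 2 (fun p : ℝ × ℝ => (A * (a * p.1 + b * p.2) ^ 2
      + B * ((a * p.1 + b * p.2) * (c * p.1 + d * p.2)) + C * (c * p.1 + d * p.2) ^ 2)) :=
    (((oL1.pow1 2).const_mul A).add ((oL1.mul oL2).const_mul B)).add ((oL2.pow1 2).const_mul C)
  set w0 := ww f φ ψ 0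
  have q3 : OO 3 (fun p => jacDet (fun p => ψ (f (φ p))) p - ((w0 * (A * a ^ 2 + B * a * c
      + C * c ^ 2)) * p.1 ^ 2 + (w0 * (2 * A * a * b + B * (a * d + b * c) + 2 * C * c * d))
      * (p.1 * p.2) + (w0 * (A * b ^ 2 + B * b * d + C * d ^ 2)) * p.2 ^ 2)) := by
    refine ((OO.mul_left hw.continuous.continuousAt q2).add (ow.mul oq)).congr fun p => ?_
    rw [jac_ww hf hφ hψ]
    ring
  obtain ⟨r1, r2, r3⟩ := quad_unique (jacDet_sm hF) q3
  rw [r1, r2, r3]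
  have hdet' : a * d - c * b ≠ 0 := by rw [← hdet]; exact hφj
  have hpos : 0 < (w0 * (a * d - c * b)) ^ 2 := by positivity
  have e : 4 * (w0 * (A * a ^ 2 + B * a * c + C * c ^ 2)) * (w0 * (A * b ^ 2 + B * b * d + C * d ^ 2))
      - (w0 * (2 * A * a * b + B * (a * d + b * c) + 2 * C * c * d)) ^ 2
      = (w0 * (a * d - c * b)) ^ 2 * (4 * A * C - B ^ 2) := by ring
  rw [e]
  constructor
  · intro h; by_contra h'; push Not at h'; nlinarith
  · intro h; nlinarith

end transfer


/-! ### Main equivalence -/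

theorem null_H {f η φ : ℝ × ℝ → ℝ × ℝ} (hf : Sm f) (hφ : Sm φ) (hφ0 : φ 0 = 0)
    (hη : ContDiffAt ℝ 1 η 0) :
    ContDiffAt ℝ 1 (fun p => fderiv ℝ f (φ p) (η (φ p))) 0 := by
  have h1 : Sm (fderiv ℝ f) := hf.fderiv_right (by simp)
  have h2 : Sm (fun p => fderiv ℝ f (φ p)) := h1.comp hφ
  have h3 : ContDiffAt ℝ 1 (fun p => η (φ p)) 0 := by
    refine ContDiffAt.comp (0 : ℝ × ℝ) (g := η) ?_ (hφ.one 0)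
    rw [hφ0]; exact hη
  exact (h2.one 0).clm_apply h3

theorem main_iff {f η φ ψ : ℝ × ℝ → ℝ × ℝ} {g : ℝ × ℝ → ℝ} {r : ℕ} (hr : 4 ≤ r)
    (hf : Sm f) (hf0 : f 0 = 0) (hη : IsNullVF f η) (hφ : Sm φ) (hψ : Sm ψ) (hg : Sm g)
    (hφ0 : φ 0 = 0) (hψ0 : ψ 0 = 0) (hφj : jacDet φ 0 ≠ 0) (hψj : jacDet ψ 0 ≠ 0)
    (hF : OO (r + 1) (fun p => ψ (f (φ p)) - MM g p)) (h2f : OO 2 (jacDet f)) :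
    ((∀ i < 3, etaIter η i (jacDet f) 0 = 0) →
      tcoeff (jacDet (fun p => ψ (f (φ p)))) 0 2 = 0) ∧
    (tcoeff (jacDet (fun p => ψ (f (φ p)))) 0 2 = 0 →
      tcoeff (jacDet (fun p => ψ (f (φ p)))) 1 1 ≠ 0 →
      (((∀ i < r - 1, etaIter η i (jacDet f) 0 = 0) ∧ etaIter η (r - 1) (jacDet f) 0 ≠ 0) ↔
      ((∀ j, j ≤ r - 1 → 1 ≤ j → tcoeff g 0 j = 0) ∧ tcoeff g 0 r ≠ 0))) := by
  obtain ⟨hη0, U, hU, hηU, hnull⟩ := hη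
  obtain ⟨m, rfl⟩ : ∃ m, r = m + 1 := ⟨r - 1, by omega⟩
  simp only [Nat.add_sub_cancel]
  have hFs : Sm (fun p => ψ (f (φ p))) := hψ.comp (hf.comp hφ)
  obtain ⟨Λ, hΛdef⟩ : ∃ Λ, Λ = jacDet (fun p => ψ (f (φ p))) := ⟨_, rfl⟩
  rw [← hΛdef]
  have hΛ : Sm Λ := by rw [hΛdef]; exact jacDet_sm hFs
  have hΛg : OO (m + 1) (fun p => Λ p - pdy g p) := by rw [hΛdef]; exact jac_close hFs hg hF
  have h2 : OO 2 Λ := by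
    rw [hΛdef]; exact (OO_jac_iff hf hφ hψ hf0 hφ0 hφj hψj 2).2 h2f
  have hgy : OO 2 (pdy g) := (h2.sub (hΛg.mono (by omega))).congr fun p => by ring
  have hww := ww_sm hf hφ hψ
  have hw0 : ww f φ ψ 0 ≠ 0 := by
    simp only [ww, hφ0, hf0]; exact mul_ne_zero hψj hφj
  have hΛw : ∀ p, Λ p = ww f φ ψ p * jacDet f (φ p) := by
    rw [hΛdef]; exact jac_ww hf hφ hψ
  obtain ⟨γ, hγ0, hγ, hch⟩ := exists_curve hU hηU
  have hchain := hch (jacDet f) (jacDet_sm hf)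
  obtain ⟨χ, hχ, hχ'⟩ := inv_exists hφ hφ0 hφj
  obtain ⟨H, hHdef⟩ : ∃ H, H = fun p => fderiv ℝ f (φ p) (η (φ p)) := ⟨_, rfl⟩
  have hH : ContDiffAt ℝ 1 H 0 := by
    rw [hHdef]
    exact null_H hf hφ hφ0 ((hηU.contDiffAt hU).of_le (by exact_mod_cast le_top))
  have hφt : Tendsto φ (𝓝 0) (𝓝 0) := OO.tendsto (N := 0) (hφ.OO1 hφ0)
  have hz : ∀ᶠ p in 𝓝 (0 : ℝ × ℝ), Λ p = 0 → H p = 0 := by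
    filter_upwards [hφt hU, hww.continuous.continuousAt.eventually_ne hw0] with p hp hwp hΛp
    rw [hΛw p] at hΛp
    rw [hHdef]
    exact hnull _ hp ((mul_eq_zero.1 hΛp).resolve_left hwp)
  have hH0 : H 0 = 0 := hz.self_of_nhds (OO.zero_at (N := 1) h2)
  have hγ1 : OO 1 γ := OO.of_differentiableAt hγ.self_of_nhds.differentiableAt hγ0
  have hγt : Tendsto γ (𝓝 0) (𝓝 0) := OO.tendsto (N := 0) hγ1
  obtain ⟨c, hcdef⟩ : ∃ c : ℝ → ℝ × ℝ, c = fun t => χ (γ t) := ⟨_, rfl⟩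
  have hc1 : OO 1 c := by rw [hcdef]; exact hχ.comp hγ1
  have hct : Tendsto c (𝓝 0) (𝓝 0) := OO.tendsto (N := 0) hc1
  have hφc : ∀ᶠ t in 𝓝 (0 : ℝ), φ (c t) = γ t := by
    rw [hcdef]; exact hγt.eventually hχ'
  obtain ⟨β, hβdef⟩ : ∃ β : ℝ → ℝ × ℝ, β = fun t => f (γ t) := ⟨_, rfl⟩
  have hβ0 : β 0 = 0 := by simp [hβdef, hγ0, hf0]
  have hβ : ∀ᶠ t in 𝓝 (0 : ℝ), HasDerivAt β (H (c t)) t := by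
    filter_upwards [hγ, hφc] with t h1 h2
    rw [hβdef, hHdef]
    simp only [h2]
    exact (hf.diff (γ t)).hasFDerivAt.comp_hasDerivAt t h1
  have hxβ : ∀ k ≤ m, OO k β → OO k (fun t => (c t).1) := by
    intro k hk hkβ
    have hβt : Tendsto β (𝓝 0) (𝓝 0) := by
      have := hβ.self_of_nhds.continuousAt.tendsto
      rwa [hβ0] at this
    have h1 : OO k (fun t => ψ (β t) - ψ 0) :=
      OO.comp_sub (v := fun _ => 0) (hψ.one 0) hβt tendsto_const_nhds (by simpa using hkβ)
    have h3 : OO k (fun t => ψ (f (φ (c t))) - MM g (c t)) := (hF.comp hc1).mono (by omega)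
    have h4 := h1.fst.sub h3.fst
    refine IsBigO.congr' h4 ?_ EventuallyEq.rfl
    filter_upwards [hφc] with t ht
    simp [ht, hβdef, hψ0, MM]
  have hβ2 : OO 2 β := by
    refine OO_of_hasDerivAt hβ0 hβ ?_
    exact (OO.of_differentiableAt (hH.differentiableAt (by norm_num)) hH0).comp hc1
  have hx2 : OO 2 (fun t => (c t).1) := hxβ 2 (by omega) hβ2
  have hx : (fun t => (c t).1) =o[𝓝 0] fun t : ℝ => t := by
    refine IsBigO.trans_isLittleO (g := fun t : ℝ => t ^ 2) ?_ ?_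
    · refine IsBigO.trans hx2 (IsBigO.of_bound 1 (Eventually.of_forall fun t => by simp))
    · simpa using (isLittleO_pow_pow (𝕜 := ℝ) (show 1 < 2 by norm_num))
  have htc : (fun t : ℝ => t) =O[𝓝 0] c := by
    have e1 : (fun t : ℝ => t) =O[𝓝 0] γ := by
      have hd : HasDerivAt γ (η 0) 0 := by have := hγ.self_of_nhds; rwa [hγ0] at this
      have := hd.isBigO_sub_rev hη0
      simpa [hγ0, Function.comp_def] using this
    have e2 : γ =O[𝓝 0] c := by
      have h1 := (hφ.diff 0).isBigO_sub
      simp only [hφ0, sub_zero] at h1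
      exact (h1.comp_tendsto hct).congr' hφc EventuallyEq.rfl
    exact e1.trans e2
  have hy : (fun t : ℝ => t) =O[𝓝 0] fun t => (c t).2 := by
    obtain ⟨C, hC0, hC⟩ := htc.exists_pos
    refine IsBigO.of_bound (2 * C) ?_
    have hxb := hx.bound (show 0 < 1 / (2 * C) by positivity)
    filter_upwards [hC.bound, hxb] with t h1 h2
    have h3 : ‖c t‖ ≤ ‖(c t).1‖ + ‖(c t).2‖ := by
      rw [Prod.norm_def]
      exact max_le_add_of_nonneg (norm_nonneg _) (norm_nonneg _)
    have h4 : C * ‖(c t).1‖ ≤ ‖t‖ / 2 := by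
      calc C * ‖(c t).1‖ ≤ C * (1 / (2 * C) * ‖t‖) := by gcongr
        _ = _ := by field_simp
    have h5 : C * ‖c t‖ ≤ C * (‖(c t).1‖ + ‖(c t).2‖) := by gcongr
    linarith
  have hk : ∀ k, OO k (fun t => Λ (c t)) ↔ ∀ i < k, etaIter η i (jacDet f) 0 = 0 := by
    intro k
    have e1 := hchain.iff (k := k)
    simp only [hγ0] at e1
    rw [← e1]
    have hcw : ContinuousAt (fun t => ww f φ ψ (c t)) 0 := by
      have hc0 : c 0 = 0 := OO.zero_at (N := 0) hc1
      have hcc : ContinuousAt c 0 := by rw [ContinuousAt, hc0]; exact hct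
      exact hww.continuous.continuousAt.comp hcc
    refine OO_unit_iff (w := fun t => ww f φ ψ (c t)) hcw ?_ ?_
    · have hc0 : c 0 = 0 := OO.zero_at (N := 0) hc1
      simpa only [hc0] using hw0
    · filter_upwards [hφc] with t ht
      rw [hΛw, ht]; rfl
  refine ⟨fun h3 => ?_, fun h02 h11 => ?_⟩
  · have o3 := (hk 3).2 h3
    have o4 := (quad_taylor2 hΛ h2).comp hc1
    have oy : OO 1 (fun t => (c t).2) := hc1.snd
    have o5 := ((hx2.pow 2).const_mul (tcoeff Λ 2 0)).mono (show 3 ≤ 2 * 2 by norm_num)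
    have o6 := (hx2.mul oy).const_mul (tcoeff Λ 1 1)
    refine pow_not_OO (i := 2) hy ((((o3.sub o4).sub o5).sub o6).congr fun t => ?_)
    ring
  · have := core_iff hΛ hg hΛg hgy h2 h02 h11 hH hz hc1 hx hy hβ0 hβ hxβ
    rw [← this, hk, hk]
    refine and_congr_right fun h => not_congr ?_
    constructor
    · intro k i hi
      rcases Nat.lt_succ_iff_lt_or_eq.1 hi with h1 | rfl
      · exact h i h1
      · exact k
    · intro k; exact k m (by omega)


/-! ### Initial normal form -/

theorem jacDet_lin (a b c d : ℝ) (q : ℝ × ℝ) :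
    jacDet (fun p : ℝ × ℝ => (a * p.1 + b * p.2, c * p.1 + d * p.2)) q = a * d - c * b := by
  have h : HasFDerivAt (fun p : ℝ × ℝ => (a * p.1 + b * p.2, c * p.1 + d * p.2))
      ((a • ContinuousLinearMap.fst ℝ ℝ ℝ + b • ContinuousLinearMap.snd ℝ ℝ ℝ).prod
        (c • ContinuousLinearMap.fst ℝ ℝ ℝ + d • ContinuousLinearMap.snd ℝ ℝ ℝ)) q :=
    ((hasFDerivAt_fst.const_mul a).add (hasFDerivAt_snd.const_mul b)).prodMk
      ((hasFDerivAt_fst.const_mul c).add (hasFDerivAt_snd.const_mul d))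
  unfold jacDet
  rw [h.fderiv]
  simp

theorem corank_facts {f : ℝ × ℝ → ℝ × ℝ} (hcr : CorankOne f) :
    jacDet f 0 = 0 ∧ ∃ u, fderiv ℝ f 0 u ≠ 0 := by
  unfold CorankOne at hcr
  constructor
  · by_contra h
    have hb := (bij_jac f).2 h
    have : LinearMap.range ((fderiv ℝ f 0).toLinearMap) = ⊤ := LinearMap.range_eq_top.2 hb.2
    rw [LinearMap.rank, this, rank_top] at hcr
    have h2 : Module.finrank ℝ (ℝ × ℝ) = 1 := Module.finrank_eq_of_rank_eq (by simpa using hcr)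
    simp at h2
  · by_contra h
    push Not at h
    have : (fderiv ℝ f 0).toLinearMap = 0 := by
      refine LinearMap.ext fun u => h u
    rw [this, LinearMap.rank_zero] at hcr
    exact zero_ne_one hcr

theorem init_lin {f : ℝ × ℝ → ℝ × ℝ} (hf : Sm f) (hf0 : f 0 = 0) {u v : ℝ × ℝ}
    (hu : fderiv ℝ f 0 u ≠ 0) (hv : fderiv ℝ f 0 v = 0) (hv0 : v ≠ 0) (r : ℕ) :
    ∃ Q Y : ℝ × ℝ → ℝ, Sm Q ∧ Sm Y ∧ OO 2 Q ∧ OO 2 Y ∧ JE r f (fun p => (p.1 + Q p, Y p)) := by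
  obtain ⟨w, hw⟩ : ∃ w, w = fderiv ℝ f 0 u := ⟨_, rfl⟩
  have hw0 : w ≠ 0 := by rw [hw]; exact hu
  have hn : w.1 ^ 2 + w.2 ^ 2 ≠ 0 := by
    intro h
    apply hw0
    have h1 : w.1 = 0 := by nlinarith [sq_nonneg w.1, sq_nonneg w.2]
    have h2 : w.2 = 0 := by nlinarith [sq_nonneg w.1, sq_nonneg w.2]
    exact Prod.ext h1 h2
  obtain ⟨n, hndef⟩ : ∃ n, n = w.1 ^ 2 + w.2 ^ 2 := ⟨_, rfl⟩
  rw [← hndef] at hn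
  have hdet : u.1 * v.2 - u.2 * v.1 ≠ 0 := by
    intro h
    have key : ∀ s : ℝ, s • v = 0 → s = 0 := fun s hs => (smul_eq_zero.1 hs).resolve_right hv0
    have e1 : v.1 • u = u.1 • v := by
      ext
      · simp [mul_comm]
      · simp; linarith
    have e2 : v.2 • u = u.2 • v := by
      ext
      · simp; linarith
      · simp [mul_comm]
    have f1 := congrArg (fderiv ℝ f 0) e1
    have f2 := congrArg (fderiv ℝ f 0) e2
    rw [map_smul, map_smul, hv, smul_zero] at f1 f2
    exact hv0 (Prod.ext ((smul_eq_zero.1 f1).resolve_right hu) ((smul_eq_zero.1 f2).resolve_right hu))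
  obtain ⟨φ, hφ⟩ : ∃ φ : ℝ × ℝ → ℝ × ℝ,
    φ = fun p => (u.1 * p.1 + v.1 * p.2, u.2 * p.1 + v.2 * p.2) := ⟨_, rfl⟩
  obtain ⟨ψ, hψ⟩ : ∃ ψ : ℝ × ℝ → ℝ × ℝ,
    ψ = fun p => (w.1 / n * p.1 + w.2 / n * p.2, (-w.2 / n) * p.1 + w.1 / n * p.2) := ⟨_, rfl⟩
  have hφs : Sm φ := by rw [hφ]; unfold Sm; fun_prop
  have hψs : Sm ψ := by rw [hψ]; unfold Sm; fun_prop
  have hφ0 : φ 0 = 0 := by simp [hφ]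
  have hψ0 : ψ 0 = 0 := by simp [hψ]
  have hF : Sm (fun p => ψ (f (φ p))) := hψs.comp (hf.comp hφs)
  have s1 : Sm (fun p => (f p).1) := hf.fst
  have s2 : Sm (fun p => (f p).2) := hf.snd
  have l1 := (lin_taylor s1 (by simp [hf0])).comp (hφs.OO1 hφ0)
  have l2 := (lin_taylor s2 (by simp [hf0])).comp (hφs.OO1 hφ0)
  have hu' := lin_expand (fderiv ℝ f 0) u
  have hv' := lin_expand (fderiv ℝ f 0) v
  rw [← hw] at hu'
  rw [hv] at hv'
  have u1 := congrArg Prod.fst hu'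
  have u2 := congrArg Prod.snd hu'
  have v1 := congrArg Prod.fst hv'
  have v2 := congrArg Prod.snd hv'
  simp only [Prod.fst_add, Prod.snd_add, Prod.smul_fst, Prod.smul_snd, smul_eq_mul, Prod.fst_zero,
    Prod.snd_zero, fderiv_fst' (hf.diff 0), fderiv_snd' (hf.diff 0)] at u1 u2 v1 v2
  change w.1 = u.1 * pdx (fun q => (f q).1) 0 + u.2 * pdy (fun q => (f q).1) 0 at u1
  change w.2 = u.1 * pdx (fun q => (f q).2) 0 + u.2 * pdy (fun q => (f q).2) 0 at u2
  change 0 = v.1 * pdx (fun q => (f q).1) 0 + v.2 * pdy (fun q => (f q).1) 0 at v1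
  change 0 = v.1 * pdx (fun q => (f q).2) 0 + v.2 * pdy (fun q => (f q).2) 0 at v2
  have m1 : OO 2 (fun p => (f (φ p)).1 - w.1 * p.1) := by
    refine l1.congr fun p => ?_
    simp only [hφ]
    linear_combination (-p.1) * u1 - p.2 * v1
  have m2 : OO 2 (fun p => (f (φ p)).2 - w.2 * p.1) := by
    refine l2.congr fun p => ?_
    simp only [hφ]
    linear_combination (-p.1) * u2 - p.2 * v2
  refine ⟨fun p => (ψ (f (φ p))).1 - p.1, fun p => (ψ (f (φ p))).2, hF.fst.sub contDiff_fst, hF.snd,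
    ?_, ?_, φ, ψ, hφs, hψs, hφ0, hψ0, ?_, ?_, ?_⟩
  · refine ((m1.const_mul (w.1 / n)).add (m2.const_mul (w.2 / n))).congr fun p => ?_
    simp only [hψ]
    field_simp
    rw [hndef]; ring
  · refine ((m1.const_mul (-w.2 / n)).add (m2.const_mul (w.1 / n))).congr fun p => ?_
    simp only [hψ]
    ring
  · rw [hφ, jacDet_lin]; exact hdet
  · rw [hψ, jacDet_lin]
    have : w.1 / n * (w.1 / n) - -w.2 / n * (w.2 / n) = 1 / n := by
      field_simp
      rw [hndef]; ring
    rw [this]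
    exact one_div_ne_zero hn
  · refine OO.congr (u := fun _ => (0 : ℝ × ℝ)) (isBigO_zero _ _) fun p => ?_
    ext <;> simp

theorem picard_solve {Q : ℝ × ℝ → ℝ} (hQ : Sm Q) (hQ2 : OO 2 Q) (k : ℕ) :
    ∃ a : ℝ × ℝ → ℝ, Sm a ∧ OO 2 (fun p => a p - p.1) ∧
      OO (k + 2) (fun p => a p + Q (a p, p.2) - p.1) := by
  have aux : ∀ a : ℝ × ℝ → ℝ, OO 2 (fun p => a p - p.1) → OO 1 (fun p : ℝ × ℝ => (a p, p.2)) :=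
    fun a ha => OO.prodMk (((ha.mono (show 1 ≤ 2 by norm_num)).add OO_fst).congr fun p => by ring)
      OO_snd
  induction k with
  | zero =>
    refine ⟨fun p => p.1, contDiff_fst, ?_, ?_⟩
    · exact OO.congr (u := fun _ => (0 : ℝ)) (isBigO_zero _ _) fun p => by simp
    · exact hQ2.congr fun p => by simp
  | succ k ih =>
    obtain ⟨a, ha, ha2, hak⟩ := ih
    have hs : Sm (fun p : ℝ × ℝ => Q (a p, p.2)) := hQ.comp (ha.prodMk contDiff_snd)
    have h2 : OO 2 (fun p : ℝ × ℝ => Q (a p, p.2)) := hQ2.comp (aux a ha2)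
    have h2' : OO 2 (fun p : ℝ × ℝ => (p.1 - Q (a p, p.2)) - p.1) :=
      h2.neg.congr fun p => by ring
    refine ⟨fun p => p.1 - Q (a p, p.2), contDiff_fst.sub hs, h2', ?_⟩
    have h3 : OO (k + 2) (fun p : ℝ × ℝ => (p.1 - Q (a p, p.2), p.2) - (a p, p.2)) := by
      refine (OO.prodMk hak.neg (v := fun _ => (0 : ℝ)) (isBigO_zero _ _)).congr fun p => ?_
      ext
      · simp; ring
      · simp
    have h4 := OO.comp_sub_order (e := Q) (Eventually.of_forall fun p => hQ.diff p)
      (OO.fderiv_of_sm (N := 1) hQ hQ2) (aux _ h2') (aux a ha2) h3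
    refine (h4.mono (by omega)).congr fun p => ?_
    ring

theorem init_form {f : ℝ × ℝ → ℝ × ℝ} (hf : Sm f) (hf0 : f 0 = 0) {u v : ℝ × ℝ}
    (hu : fderiv ℝ f 0 u ≠ 0) (hv : fderiv ℝ f 0 v = 0) (hv0 : v ≠ 0) (r : ℕ) :
    ∃ g : ℝ × ℝ → ℝ, Sm g ∧ OO 2 g ∧ JE r f (MM g) := by
  obtain ⟨Q, Y, hQ, hY, hQ2, hY2, hJ⟩ := init_lin hf hf0 hu hv hv0 r
  obtain ⟨a, ha, ha2, hak⟩ := picard_solve hQ hQ2 r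
  have hφs : Sm (fun p : ℝ × ℝ => (a p, p.2)) := ha.prodMk contDiff_snd
  have ha0 : a 0 = 0 := by simpa using OO.zero_at (N := 1) ha2
  have hφ1 : OO 1 (fun p : ℝ × ℝ => (a p, p.2)) := hφs.OO1 (by simp [ha0])
  refine ⟨fun p => Y (a p, p.2), hY.comp hφs, hY2.comp hφ1, ?_⟩
  have hs : Sm (fun p : ℝ × ℝ => (p.1 + Q p, Y p)) := (contDiff_fst.add hQ).prodMk hY
  have hQ0 := OO.zero_at (N := 1) hQ2
  have hY0 := OO.zero_at (N := 1) hY2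
  refine JE.trans hf (MM_sm (hY.comp hφs) |> fun _ => hs) hf0 (by simp [hQ0, hY0]) hJ ?_
  refine ⟨fun p => (a p, p.2), fun p => (1 * p.1, 1 * p.2), hφs, by unfold Sm; fun_prop,
    by simp [ha0], by simp, ?_, ?_, ?_⟩
  · rw [jacDet_eq hφs]
    simp only [pdx_snd, pdy_snd]
    have e1 : pdx a 0 = 1 := by
      have hs1 : Sm (fun p : ℝ × ℝ => a p - p.1) := ha.sub contDiff_fst
      have h1 := OO.zero_at (N := 0) (OO.pdx (N := 1) hs1 ha2)
      have h2 := congrFun (pdx_add hs1 contDiff_fst) 0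
      rw [h1, pdx_fst] at h2
      simpa using h2
    change pdx a 0 * 1 - 0 * _ ≠ 0
    rw [e1]; norm_num
  · rw [jacDet_diag]; norm_num
  · refine (OO.prodMk (hak.mono (show r + 1 ≤ r + 2 by omega)) (v := fun _ => (0 : ℝ))
      (isBigO_zero _ _)).congr fun p => ?_
    ext <;> simp [MM]

/-! ### The model -/

def gmod (r : ℕ) : ℝ × ℝ → ℝ := fun p => mnm 1 1 2 p + mnm 1 0 r p

theorem gmod_sm (r : ℕ) : Sm (gmod r) := (mnm_sm _ _ _).add (mnm_sm _ _ _)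

theorem gmod_MM (r : ℕ) : (fun p : ℝ × ℝ => (p.1, p.1 * p.2 ^ 2 + p.2 ^ r)) = MM (gmod r) := by
  funext p; simp [MM, gmod, mnm]

theorem gmod_tc {r : ℕ} (hr : 4 ≤ r) (j : ℕ) : tcoeff (gmod r) 0 j = if j = r then 1 else 0 := by
  unfold gmod
  rw [tcoeff_eq, DD_add (mnm_sm _ _ _) (mnm_sm _ _ _), DD_mnm, DD_mnm]
  have : (j.factorial : ℝ) ≠ 0 := by positivity
  by_cases h : j = r
  · simp [h]
    exact Nat.factorial_ne_zero r
  · have h' : r ≠ j := fun e => h e.symm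
    simp [h, h']

theorem gmod_pdy {r : ℕ} (hr : 4 ≤ r) :
    OO 3 (fun p => pdy (gmod r) p - (0 * p.1 ^ 2 + 2 * (p.1 * p.2) + 0 * p.2 ^ 2)) := by
  have h := OO_mon (i := 0) (j := r - 1) (N := 3) (r : ℝ) (by omega)
  refine h.congr fun p => ?_
  unfold gmod
  rw [pdy_add (mnm_sm _ _ _) (mnm_sm _ _ _), pdy_mnm, pdy_mnm]
  simp only [mnm]
  norm_num

theorem stmt8 (f η : ℝ × ℝ → ℝ × ℝ)
    (hf : ContDiff ℝ (⊤ : ℕ∞) f) (hf0 : f 0 = 0) (hcr : CorankOne f)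
    (hη : IsNullVF f η) :
    ∀ r : ℕ, 4 ≤ r →
      (JetEquiv r f (fun p => (p.1, p.1 * p.2 ^ 2 + p.2 ^ r)) ↔
        (fderiv ℝ (jacDet f) 0 = 0 ∧ (hess (jacDet f)).det < 0 ∧
          (∀ i, 2 ≤ i → i ≤ r - 2 → etaIter η i (jacDet f) 0 = 0) ∧
          etaIter η (r - 1) (jacDet f) 0 ≠ 0)) := by
  intro r hr
  have hmod : Sm (fun p : ℝ × ℝ => (p.1, p.1 * p.2 ^ 2 + p.2 ^ r)) := by
    rw [gmod_MM]; exact MM_sm (gmod_sm r)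
  rw [JetEquiv_iff hf hmod]
  have hjs := jacDet_sm hf
  constructor
  · intro hJE
    rw [gmod_MM] at hJE
    obtain ⟨φ, ψ, hφ, hψ, hφ0, hψ0, hφj, hψj, hF⟩ := hJE
    have hFs : Sm (fun p => ψ (f (φ p))) := hψ.comp (hf.comp hφ)
    have hΛs := jacDet_sm hFs
    have hc := jac_close hFs (gmod_sm r) hF
    have hq : OO 3 (fun p => jacDet (fun p => ψ (f (φ p))) p -
        (0 * p.1 ^ 2 + 2 * (p.1 * p.2) + 0 * p.2 ^ 2)) :=
      ((hc.mono (show 3 ≤ r by omega)).add (gmod_pdy hr)).congr fun p => by ring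
    obtain ⟨t20, t11, t02⟩ := quad_unique hΛs hq
    have h2m : OO 2 (fun p : ℝ × ℝ => 2 * (p.1 * p.2)) :=
      (OO_mon (i := 1) (j := 1) (N := 2) (2 : ℝ) (by norm_num)).congr fun p => by ring
    have h2Λ : OO 2 (jacDet (fun p => ψ (f (φ p)))) :=
      ((hq.mono (show 2 ≤ 3 by omega)).add h2m).congr fun p => by ring
    have h2f : OO 2 (jacDet f) := (OO_jac_iff hf hφ hψ hf0 hφ0 hφj hψj 2).1 h2Λ
    have hdet : (hess (jacDet f)).det < 0 := by
      rw [← hess_transfer hf hφ hψ hf0 hφ0 hφj hψj h2f, hess_det hΛs, t20, t11, t02]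
      norm_num
    have hm := ((main_iff hr hf hf0 hη hφ hψ (gmod_sm r) hφ0 hψ0 hφj hψj hF h2f).2 t02
      (by rw [t11]; norm_num)).2 ⟨fun j hj _ => by
        rw [gmod_tc hr, if_neg (by omega)], by rw [gmod_tc hr, if_pos rfl]; norm_num⟩
    exact ⟨((OO2_iff hjs).1 h2f).2, hdet, fun i _ hi => hm.1 i (by omega), hm.2⟩
  · rintro ⟨hd, hdet, hi, hne⟩
    obtain ⟨hj0, u, hu⟩ := corank_facts hcr
    have hv : fderiv ℝ f 0 (η 0) = 0 := by
      obtain ⟨_, U, hU, _, hn⟩ := hη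
      exact hn 0 (mem_of_mem_nhds hU) hj0
    obtain ⟨g, hg, hg2, hJE⟩ := init_form hf hf0 hu hv hη.1 r
    have hJE' := hJE
    obtain ⟨φ, ψ, hφ, hψ, hφ0, hψ0, hφj, hψj, hF⟩ := hJE
    have hFs : Sm (fun p => ψ (f (φ p))) := hψ.comp (hf.comp hφ)
    have hΛs := jacDet_sm hFs
    have hc := jac_close hFs hg hF
    have h2f : OO 2 (jacDet f) := (OO2_iff hjs).2 ⟨hj0, hd⟩
    have h2Λ := (OO_jac_iff hf hφ hψ hf0 hφ0 hφj hψj 2).2 h2f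
    have hall : ∀ i < r - 1, etaIter η i (jacDet f) 0 = 0 := by
      intro i hir
      match i with
      | 0 => exact hj0
      | 1 =>
        change fderiv ℝ (jacDet f) 0 (η 0) = 0
        rw [hd]; rfl
      | k + 2 => exact hi (k + 2) (by omega) (by omega)
    obtain ⟨m1, m2⟩ := main_iff hr hf hf0 hη hφ hψ hg hφ0 hψ0 hφj hψj hF h2f
    have t02 := m1 fun i h3 => hall i (by omega)
    have hdΛ := (hess_transfer hf hφ hψ hf0 hφ0 hφj hψj h2f).2 hdet
    rw [hess_det hΛs, t02] at hdΛ
    have t11 : tcoeff (jacDet (fun p => ψ (f (φ p)))) 1 1 ≠ 0 := by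
      intro h; rw [h] at hdΛ; norm_num at hdΛ
    obtain ⟨c1, c2⟩ := (m2 t02 t11).1 ⟨hall, hne⟩
    have hDD : ∀ i j, i + j < r → DD i j (jacDet (fun p => ψ (f (φ p)))) = DD i (j + 1) g := by
      intro i j hij
      have h1 := hc.DD (hΛs.sub hg.pdy) i j hij
      rw [DD_sub hΛs hg.pdy, DD_pdy] at h1
      linarith
    have h11 : tcoeff g 1 1 = 0 := by
      rw [tcoeff_eq, ← hDD 1 0 (by omega), h2Λ.DD hΛs 1 0 (by omega), zero_div]
    have h12 : tcoeff g 1 2 ≠ 0 := by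
      intro h
      apply t11
      rw [tcoeff_eq] at h ⊢
      rw [hDD 1 1 (by omega)]
      have h3 : DD 1 2 g = 0 := by
        have h4 := (div_eq_zero_iff.1 h).resolve_right (by positivity)
        exact h4
      rw [h3, zero_div]
    have h0 : ∀ j < r, tcoeff g 0 j = 0 := by
      intro j hj
      rcases Nat.eq_zero_or_pos j with rfl | hp
      · exact hg2.tcoeff hg 0 0 (by omega)
      · exact c1 j (by omega) hp
    exact JE.trans hf (MM_sm hg) hf0 (MM_zero (OO.zero_at (N := 1) hg2)) hJE'
      (JE_normal hr hg h0 c2 h11 h12)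
end
end

section
/- For all real numbers c and d, the polynomial maps F(x,y) = (x, xy² + y⁴ + cy⁶ + dy⁷) and G(x,y) = (x, xy² + y⁴ + dy⁷) have A⁷-equivalent 7-jets at the origin: j⁷F(0) ∼_{A⁷} j⁷G(0). -/
open Filter Topology

noncomputable section

/-- All derivatives of order `< n` vanish at the origin. -/
def VanishTo (n : ℕ) (g : ℝ × ℝ → ℝ) : Prop :=
  ContDiff ℝ (⊤ : ℕ∞) g ∧ ∀ i < n, iteratedFDeriv ℝ i g 0 = 0

lemma VanishTo.mul {a b : ℕ} {f g : ℝ × ℝ → ℝ} (hf : VanishTo a f) (hg : VanishTo b g) :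
    VanishTo (a + b) (fun p => f p * g p) := by
  refine ⟨hf.1.mul hg.1, fun i hi => ?_⟩
  have h := norm_iteratedFDeriv_mul_le hf.1 hg.1 (0 : ℝ × ℝ) (n := i)
    (by exact_mod_cast le_top)
  rw [Finset.sum_eq_zero] at h
  · exact norm_le_zero_iff.1 h
  · intro k hk
    rw [Finset.mem_range] at hk
    by_cases hka : k < a
    · simp [hf.2 k hka]
    · simp [hg.2 (i - k) (by omega)]

lemma vanishTo_zero {g : ℝ × ℝ → ℝ} (hg : ContDiff ℝ (⊤ : ℕ∞) g) : VanishTo 0 g :=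
  ⟨hg, fun i hi => absurd hi (by omega)⟩

lemma vanishTo_one {g : ℝ × ℝ → ℝ} (hg : ContDiff ℝ (⊤ : ℕ∞) g) (h0 : g 0 = 0) :
    VanishTo 1 g := by
  refine ⟨hg, fun i hi => ?_⟩
  obtain rfl : i = 0 := by omega
  ext m
  simp [h0]

lemma VanishTo.pow {a : ℕ} {f : ℝ × ℝ → ℝ} (hf : VanishTo a f) (k : ℕ) :
    VanishTo (k * a) (fun p => f p ^ k) := by
  induction k with
  | zero => simpa using vanishTo_zero contDiff_const
  | succ k ih =>
    have := ih.mul hf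
    simpa [pow_succ, Nat.succ_mul] using this

/-- Globalisation of a local smooth function. -/
lemma exists_global {h : ℝ × ℝ → ℝ × ℝ} (hh : ∀ᶠ p in 𝓝 (0 : ℝ × ℝ), ContDiffAt ℝ (⊤ : ℕ∞) h p) :
    ∃ ψ : ℝ × ℝ → ℝ × ℝ, ContDiff ℝ (⊤ : ℕ∞) ψ ∧ ψ =ᶠ[𝓝 0] h := by
  obtain ⟨ε, hε, hball⟩ := Metric.eventually_nhds_iff_ball.1 hh
  let χ : ContDiffBump (0 : ℝ × ℝ) := ⟨ε / 4, ε / 2, by positivity, by linarith⟩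
  refine ⟨fun p => χ p • h p, ?_, ?_⟩
  · rw [contDiff_iff_contDiffAt]
    intro p
    by_cases hp : p ∈ Metric.ball (0 : ℝ × ℝ) ε
    · exact χ.contDiffAt.smul (hball p hp)
    · have hp' : p ∉ tsupport χ := by
        rw [χ.tsupport_eq]
        intro hc
        apply hp
        exact Metric.closedBall_subset_ball (show ε / 2 < ε by linarith) hc
      have : (fun p => χ p • h p) =ᶠ[𝓝 p] fun _ => 0 := by
        filter_upwards [notMem_tsupport_iff_eventuallyEq.1 hp'] with q hq
        simp [hq]
      exact contDiffAt_const.congr_of_eventuallyEq this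
  · filter_upwards [χ.eventuallyEq_one] with q hq
    simp [hq]

/-- The inverse of the coordinate change in the target. -/
def tgt (c : ℝ) (q : ℝ × ℝ) : ℝ × ℝ := (q.1 - c * q.1 ^ 2 - c * q.2, q.2 * (1 - c * q.1))

lemma tgt_contDiff (c : ℝ) (n : WithTop ℕ∞) : ContDiff ℝ n (tgt c) := by
  unfold tgt
  fun_prop

def tgtLin (c : ℝ) : (ℝ × ℝ) ≃L[ℝ] (ℝ × ℝ) :=
  LinearEquiv.toContinuousLinearEquiv
  { toFun := fun q => (q.1 - c * q.2, q.2)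
    invFun := fun q => (q.1 + c * q.2, q.2)
    map_add' := by intro p q; ext <;> simp; ring
    map_smul' := by intro a p; ext <;> simp; ring
    left_inv := by intro p; simp
    right_inv := by intro p; simp }

lemma tgt_fderiv (c : ℝ) : HasFDerivAt (tgt c) (tgtLin c : (ℝ × ℝ) →L[ℝ] (ℝ × ℝ)) 0 := by
  have h1 : HasFDerivAt (fun q : ℝ × ℝ => q.1) (ContinuousLinearMap.fst ℝ ℝ ℝ) 0 := hasFDerivAt_fst
  have h2 : HasFDerivAt (fun q : ℝ × ℝ => q.2) (ContinuousLinearMap.snd ℝ ℝ ℝ) 0 := hasFDerivAt_snd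
  have := ((h1.sub ((h1.pow 2).const_mul c)).sub (h2.const_mul c)).prodMk
    (h2.mul ((h1.const_mul c).const_sub 1))
  refine HasFDerivAt.congr_fderiv this ?_
  ext <;> simp [tgtLin]

lemma exists_psi (c : ℝ) : ∃ ψ : ℝ × ℝ → ℝ × ℝ, ContDiff ℝ (⊤ : ℕ∞) ψ ∧
    ∀ᶠ p in 𝓝 (0 : ℝ × ℝ), ψ (tgt c p) = p := by
  have hcd : ContDiffAt ℝ (⊤ : WithTop ℕ∞) (tgt c) 0 := (tgt_contDiff c _).contDiffAt
  have h0 : tgt c 0 = 0 := by simp [tgt]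
  have hne : (⊤ : WithTop ℕ∞) ≠ 0 := by simp
  have hinv := hcd.to_localInverse (tgt_fderiv c) hne
  rw [h0] at hinv
  have hev : ∀ᶠ p in 𝓝 (0 : ℝ × ℝ),
      ContDiffAt ℝ (⊤ : ℕ∞) (hcd.localInverse (tgt_fderiv c) hne) p := by
    filter_upwards [hinv.eventually (by simp)] with p hp
    exact hp.of_le le_top
  obtain ⟨ψ, hψ, he⟩ := exists_global hev
  refine ⟨ψ, hψ, ?_⟩
  have hl : ∀ᶠ p in 𝓝 (0 : ℝ × ℝ), hcd.localInverse (tgt_fderiv c) hne (tgt c p) = p :=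
    (hcd.hasStrictFDerivAt' (tgt_fderiv c) hne).eventually_left_inverse
  have ht : Tendsto (tgt c) (𝓝 0) (𝓝 0) := by
    have := (tgt_contDiff c 0).continuous.tendsto 0
    rwa [h0] at this
  filter_upwards [hl, ht.eventually he] with p h1 h2
  rw [h2, h1]

theorem stmt9 (c d : ℝ) :
    JetEquiv 7 (fun p => (p.1, p.1 * p.2 ^ 2 + p.2 ^ 4 + c * p.2 ^ 6 + d * p.2 ^ 7))
      (fun p => (p.1, p.1 * p.2 ^ 2 + p.2 ^ 4 + d * p.2 ^ 7)) := by
  obtain ⟨ψ, hψ, hinv⟩ := exists_psi c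
  have ht0 : tgt c 0 = 0 := by simp [tgt]
  have hψ0 : ψ 0 = 0 := by
    have := hinv.self_of_nhds
    rwa [ht0] at this
  set F : ℝ × ℝ → ℝ × ℝ :=
    fun p => (p.1, p.1 * p.2 ^ 2 + p.2 ^ 4 + c * p.2 ^ 6 + d * p.2 ^ 7) with hF
  set G : ℝ × ℝ → ℝ × ℝ := fun p => (p.1, p.1 * p.2 ^ 2 + p.2 ^ 4 + d * p.2 ^ 7) with hG
  have hGc : ContDiff ℝ (⊤ : ℕ∞) G := by rw [hG]; fun_prop
  have hFc : ContDiff ℝ (⊤ : ℕ∞) F := by rw [hF]; fun_prop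
  have hG0 : G 0 = 0 := by simp [hG]
  have hF0 : F 0 = 0 := by simp [hF]
  set φ : ℝ × ℝ → ℝ × ℝ := fun p => (p.1 - c * p.1 ^ 2 - c * (p.1 * p.2 ^ 2 + p.2 ^ 4 + d * p.2 ^ 7), p.2)
    with hφ
  have hφc : ContDiff ℝ (⊤ : ℕ∞) φ := by rw [hφ]; fun_prop
  have hφ0 : φ 0 = 0 := by simp [hφ]
  have hφd : HasFDerivAt φ (ContinuousLinearMap.id ℝ (ℝ × ℝ)) 0 := by
    have h1 : HasFDerivAt (fun q : ℝ × ℝ => q.1) (ContinuousLinearMap.fst ℝ ℝ ℝ) 0 :=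
      hasFDerivAt_fst
    have h2 : HasFDerivAt (fun q : ℝ × ℝ => q.2) (ContinuousLinearMap.snd ℝ ℝ ℝ) 0 :=
      hasFDerivAt_snd
    have := ((h1.sub ((h1.pow 2).const_mul c)).sub
      ((((h1.mul (h2.pow 2)).add (h2.pow 4)).add ((h2.pow 7).const_mul d)).const_mul c)).prodMk h2
    refine HasFDerivAt.congr_fderiv this ?_
    ext <;> simp
  refine ⟨φ, ψ, hφc, hψ, hφ0, hψ0, ?_, ?_, ?_⟩
  · rw [hφd.fderiv]
    exact Function.bijective_id
  · have hd : HasFDerivAt ψ (fderiv ℝ ψ 0) (tgt c 0) := by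
      rw [ht0]
      exact (hψ.differentiable (by simp) 0).hasFDerivAt
    have hcomp := hd.comp 0 (tgt_fderiv c)
    have hid : HasFDerivAt (ψ ∘ tgt c) (ContinuousLinearMap.id ℝ (ℝ × ℝ)) 0 :=
      (hasFDerivAt_id (0 : ℝ × ℝ)).congr_of_eventuallyEq hinv
    have heq := hcomp.unique hid
    have hs : Function.Surjective (fderiv ℝ ψ 0).toLinearMap := by
      intro v
      exact ⟨tgtLin c v, by simpa using congrArg (fun L => L v) heq⟩
    exact ⟨LinearMap.injective_iff_surjective.2 hs, hs⟩
  · -- the remainder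
    set r : ℝ × ℝ → ℝ := fun p => p.2 ^ 7 * (p.1 * (c * d) - p.2 ^ 2 * (c * d)) with hr
    have hrv : VanishTo 8 r := by
      have h2 : VanishTo 1 (fun p : ℝ × ℝ => p.2) := vanishTo_one contDiff_snd rfl
      exact (h2.pow 7).mul (vanishTo_one (by fun_prop) (by simp))
    have hsplit : F ∘ φ = (tgt c ∘ G) + (ContinuousLinearMap.inr ℝ ℝ ℝ ∘ r) := by
      funext p
      ext
      · simp [hF, hφ, hG, tgt]
      · simp [hF, hφ, hG, tgt, hr]
        ring
    have htG : ContDiff ℝ (⊤ : ℕ∞) (tgt c ∘ G) := (tgt_contDiff c _).comp hGc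
    have hjet : ∀ i ≤ 7, iteratedFDeriv ℝ i (F ∘ φ) 0 = iteratedFDeriv ℝ i (tgt c ∘ G) 0 := by
      intro i hi
      have hle : ((i : ℕ∞) : WithTop ℕ∞) ≤ ((⊤ : ℕ∞) : WithTop ℕ∞) := by exact_mod_cast le_top
      have hrc : ContDiff ℝ (⊤ : ℕ∞) (ContinuousLinearMap.inr ℝ ℝ ℝ ∘ r) :=
        (ContinuousLinearMap.inr ℝ ℝ ℝ).contDiff.comp hrv.1
      rw [hsplit, iteratedFDeriv_add_apply (htG.of_le hle).contDiffAt (hrc.of_le hle).contDiffAt,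
        ContinuousLinearMap.iteratedFDeriv_comp_left _ hrv.1.contDiffAt hle, hrv.2 i (by omega)]
      ext m <;> simp
    have hloc : ψ ∘ (tgt c ∘ G) =ᶠ[𝓝 0] G := by
      have hGt : Tendsto G (𝓝 0) (𝓝 0) := by
        have := hGc.continuous.tendsto 0
        rwa [hG0] at this
      exact hGt.eventually hinv
    intro i hi
    have hle : ((i : ℕ∞) : WithTop ℕ∞) ≤ ((⊤ : ℕ∞) : WithTop ℕ∞) := by exact_mod_cast le_top
    rw [← (hloc.iteratedFDeriv ℝ i).self_of_nhds,
      iteratedFDeriv_comp hψ.contDiffAt (hFc.comp hφc).contDiffAt hle,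
      iteratedFDeriv_comp hψ.contDiffAt htG.contDiffAt hle]
    have e1 : (F ∘ φ) 0 = 0 := by simp [hφ0, hF0]
    have e2 : (tgt c ∘ G) 0 = 0 := by simp [hG0, ht0]
    rw [e1, e2]
    unfold FormalMultilinearSeries.taylorComp
    refine Finset.sum_congr rfl fun P _ => ?_
    have hfun : (fun m => ftaylorSeries ℝ (F ∘ φ) 0 (P.partSize m)) =
        fun m => ftaylorSeries ℝ (tgt c ∘ G) 0 (P.partSize m) := by
      funext m
      exact hjet _ ((P.partSize_le m).trans hi)
    unfold FormalMultilinearSeries.compAlongOrderedFinpartition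
    rw [hfun]
end
end

section
/- For all real numbers c and d, the polynomial maps F(x,y) = (x, xy² + y⁴ + cy⁸ + dy⁹) and G(x,y) = (x, xy² + y⁴ + dy⁹) have A⁹-equivalent 9-jets at the origin: j⁹F(0) ∼_{A⁹} j⁹G(0). -/
open Filter Topology

noncomputable section

/-- `f` is smooth and vanishes to order `n` at the origin. -/
def VanOrd (n : ℕ) (f : ℝ × ℝ → ℝ) : Prop :=
  ContDiff ℝ (⊤ : ℕ∞) f ∧ ∀ i < n, iteratedFDeriv ℝ i f 0 = 0

theorem VanOrd.mul {m n k : ℕ} {f g : ℝ × ℝ → ℝ} (hf : VanOrd m f) (hg : VanOrd n g)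
    (hk : k ≤ m + n) : VanOrd k (f * g) := by
  refine ⟨hf.1.mul hg.1, fun i hi => ?_⟩
  have h := norm_iteratedFDeriv_mul_le hf.1 hg.1 (0 : ℝ × ℝ) (n := i) (by exact_mod_cast le_top)
  rw [← norm_le_zero_iff]
  refine h.trans (le_of_eq (Finset.sum_eq_zero fun j hj => ?_))
  have hj' := Finset.mem_range.mp hj
  by_cases hjm : j < m
  · rw [hf.2 j hjm]; simp
  · rw [hg.2 (i - j) (by omega)]; simp

theorem VanOrd.add {n : ℕ} {f g : ℝ × ℝ → ℝ} (hf : VanOrd n f) (hg : VanOrd n g) :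
    VanOrd n (f + g) := by
  refine ⟨hf.1.add hg.1, fun i hi => ?_⟩
  have hi' : ((i : ℕ) : WithTop ℕ∞) ≤ ((⊤ : ℕ∞) : WithTop ℕ∞) := by exact_mod_cast le_top
  rw [iteratedFDeriv_add_apply (hf.1.of_le hi').contDiffAt (hg.1.of_le hi').contDiffAt,
    hf.2 i hi, hg.2 i hi, add_zero]

theorem VanOrd.of_smooth {f : ℝ × ℝ → ℝ} (hf : ContDiff ℝ (⊤ : ℕ∞) f) : VanOrd 0 f :=
  ⟨hf, fun i hi => absurd hi (Nat.not_lt_zero i)⟩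

theorem VanOrd.mono {m n : ℕ} {f : ℝ × ℝ → ℝ} (hf : VanOrd n f) (h : m ≤ n) : VanOrd m f :=
  ⟨hf.1, fun i hi => hf.2 i (hi.trans_le h)⟩

theorem VanOrd.one_of {f : ℝ × ℝ → ℝ} (hf : ContDiff ℝ (⊤ : ℕ∞) f) (h0 : f 0 = 0) :
    VanOrd 1 f := by
  refine ⟨hf, fun i hi => ?_⟩
  obtain rfl : i = 0 := by omega
  ext m
  simpa using h0

theorem VanOrd.pow {n : ℕ} {f : ℝ × ℝ → ℝ} (hf : VanOrd n f) (k : ℕ) :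
    VanOrd (k * n) (f ^ k) := by
  induction k with
  | zero =>
    rw [pow_zero]
    exact (VanOrd.of_smooth (f := 1) (contDiff_const (c := (1 : ℝ)))).mono (by simp)
  | succ k ih => rw [pow_succ]; exact ih.mul hf (by rw [Nat.succ_mul])

theorem remainder_vanOrd (x y e d : ℝ × ℝ → ℝ) (hx : VanOrd 1 x) (hy : VanOrd 1 y)
    (he : VanOrd 0 e) (hd : VanOrd 0 d) :
    VanOrd 10 (fun p => (fun H : ℝ => H - 2 * e p * H ^ 2 + 7 * (e p) ^ 2 * H ^ 3)
      (x p * (y p + e p * x p * y p ^ 3) ^ 2 + (y p + e p * x p * y p ^ 3) ^ 4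
        + 2 * e p * (y p + e p * x p * y p ^ 3) ^ 8 + d p * (y p + e p * x p * y p ^ 3) ^ 9)
      - (x p * y p ^ 2 + y p ^ 4 + d p * y p ^ 9)) := by
  have hc : ∀ r : ℝ, VanOrd 0 (fun _ => r) := fun r => VanOrd.of_smooth contDiff_const
  have hxs := hx.1
  have hys := hy.1
  have hes := he.1
  have hds := hd.1
  obtain ⟨s, hs⟩ : ∃ s, s = e * (x * y ^ 2) := ⟨_, rfl⟩
  have hxy : VanOrd 3 (x * y ^ 2) := hx.mul (hy.pow 2) (by norm_num)
  have hsV : VanOrd 3 s := by rw [hs]; exact he.mul hxy (by norm_num)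
  have hss := hsV.1
  have h4 : VanOrd 4 (y ^ 4) := hy.pow 4
  have h8 : VanOrd 8 (y ^ 8) := hy.pow 8
  have h9 : VanOrd 9 (y ^ 9) := hy.pow 9
  obtain ⟨A4, hA4⟩ : ∃ A, A = fun p => 6 + 4 * s p + s p ^ 2 := ⟨_, rfl⟩
  obtain ⟨A8, hA8⟩ : ∃ A, A = fun p => 8 + 28 * s p + 56 * s p ^ 2 + 70 * s p ^ 3
    + 56 * s p ^ 4 + 28 * s p ^ 5 + 8 * s p ^ 6 + s p ^ 7 := ⟨_, rfl⟩
  obtain ⟨A9, hA9⟩ : ∃ A, A = fun p => 9 + 36 * s p + 84 * s p ^ 2 + 126 * s p ^ 3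
    + 126 * s p ^ 4 + 84 * s p ^ 5 + 36 * s p ^ 6 + 9 * s p ^ 7 + s p ^ 8 := ⟨_, rfl⟩
  have hA4s : ContDiff ℝ (⊤ : ℕ∞) A4 := by rw [hA4]; fun_prop
  have hA8s : ContDiff ℝ (⊤ : ℕ∞) A8 := by rw [hA8]; fun_prop
  have hA9s : ContDiff ℝ (⊤ : ℕ∞) A9 := by rw [hA9]; fun_prop
  obtain ⟨R, hR⟩ : ∃ R, R = (s ^ 2 * y ^ 4) * A4 + (y ^ 8 * s) * (fun p => 2 * e p * A8 p)
    + (y ^ 9 * s) * (d * A9) := ⟨_, rfl⟩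
  have hRV : VanOrd 10 R := by
    rw [hR]
    refine (VanOrd.add ?_ ?_).add ?_
    · exact ((hsV.pow 2).mul h4 le_rfl).mul (VanOrd.of_smooth hA4s) (by norm_num)
    · exact (h8.mul hsV le_rfl).mul (n := 0) (VanOrd.of_smooth (by fun_prop)) (by norm_num)
    · exact (h9.mul hsV le_rfl).mul (n := 0) (VanOrd.of_smooth (hds.mul hA9s)) (by norm_num)
  obtain ⟨Q', hQ'⟩ : ∃ Q', Q' = s * y ^ 4 * (fun _ => 4) + s ^ 2 * (x * y ^ 2)
    + y ^ 8 * (fun p => 2 * e p) + y ^ 9 * d := ⟨_, rfl⟩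
  have hQ'V : VanOrd 7 Q' := by
    rw [hQ']
    refine ((VanOrd.add ?_ ?_).add ?_).add ?_
    · exact (hsV.mul h4 le_rfl).mul (hc 4) (by norm_num)
    · exact (hsV.pow 2).mul hxy (by norm_num)
    · exact h8.mul (n := 0) (VanOrd.of_smooth (by fun_prop)) (by norm_num)
    · exact h9.mul hd (by norm_num)
  obtain ⟨Q, hQ⟩ : ∃ Q, Q = s * (x * y ^ 2) * (fun _ => 2) + Q' := ⟨_, rfl⟩
  have hQV : VanOrd 6 Q := by
    rw [hQ]
    refine VanOrd.add ?_ (hQ'V.mono (by norm_num))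
    exact (hsV.mul hxy le_rfl).mul (hc 2) (by norm_num)
  obtain ⟨P, hP⟩ : ∃ P, P = x * y ^ 2 + y ^ 4 := ⟨_, rfl⟩
  have hPV : VanOrd 3 P := by rw [hP]; exact hxy.add (h4.mono (by norm_num))
  have hPs := hPV.1
  have hQs := hQV.1
  have hRs := hRV.1
  have key : VanOrd 10 (R * (fun p => 1 - 2 * e p * (2 * (P p + Q p) + R p)
        + 7 * e p ^ 2 * (3 * (P p + Q p) ^ 2 + 3 * (P p + Q p) * R p + R p ^ 2))
      + (Q * Q + (x * y ^ 2) * Q' * (fun _ => 2) + y ^ 4 * Q * (fun _ => 2)) * (fun p => -2 * e p)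
      + (P ^ 2 * Q * (fun _ => 3) + Q * Q * (fun p => 3 * P p + Q p)
        + (x * y ^ 2) ^ 2 * y ^ 4 * (fun p => 3)
        + y ^ 4 * y ^ 8 * (fun p => 1)
        + (x * y ^ 2) * y ^ 8 * (fun p => 3)) * (fun p => 7 * e p ^ 2)) := by
    refine (VanOrd.add ?_ ?_).add ?_
    · exact hRV.mul (n := 0) (VanOrd.of_smooth (by fun_prop)) (by norm_num)
    · refine VanOrd.mul (m := 10) (n := 0) ((VanOrd.add ?_ ?_).add ?_)
        (VanOrd.of_smooth (by fun_prop)) (by norm_num)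
      · exact hQV.mul hQV (by norm_num)
      · exact (hxy.mul hQ'V le_rfl).mul (hc 2) (by norm_num)
      · exact (h4.mul hQV le_rfl).mul (hc 2) (by norm_num)
    · refine VanOrd.mul (m := 10) (n := 0) ((((VanOrd.add ?_ ?_).add ?_).add ?_).add ?_)
        (VanOrd.of_smooth (by fun_prop)) (by norm_num)
      · exact ((hPV.pow 2).mul hQV le_rfl).mul (hc 3) (by norm_num)
      · exact (hQV.mul hQV le_rfl).mul (n := 0) (VanOrd.of_smooth (by fun_prop)) (by norm_num)
      · exact ((hxy.pow 2).mul h4 le_rfl).mul (hc 3) (by norm_num)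
      · exact (h4.mul h8 le_rfl).mul (n := 0) (VanOrd.of_smooth (by fun_prop)) (by norm_num)
      · exact (hxy.mul h8 le_rfl).mul (hc 3) (by norm_num)
  convert key using 1
  funext p
  have es : s p = e p * (x p * y p ^ 2) := by rw [hs]; rfl
  have eH : x p * (y p + e p * x p * y p ^ 3) ^ 2 + (y p + e p * x p * y p ^ 3) ^ 4
      + 2 * e p * (y p + e p * x p * y p ^ 3) ^ 8 + d p * (y p + e p * x p * y p ^ 3) ^ 9
      = P p + Q p + R p := by
    have eY : y p + e p * x p * y p ^ 3 = y p * (1 + s p) := by rw [es]; ring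
    rw [eY, hP, hQ, hQ', hR, hA4, hA8, hA9]
    simp only [Pi.add_apply, Pi.mul_apply, Pi.pow_apply]
    ring
  have eQ' : Q' p = s p * y p ^ 4 * 4 + s p ^ 2 * (x p * y p ^ 2)
      + y p ^ 8 * (2 * e p) + y p ^ 9 * d p := by rw [hQ']; rfl
  have eQ : Q p = s p * (x p * y p ^ 2) * 2 + Q' p := by rw [hQ]; rfl
  have eP : P p = x p * y p ^ 2 + y p ^ 4 := by rw [hP]; rfl
  rw [eH]
  simp only [Pi.add_apply, Pi.mul_apply, Pi.pow_apply]
  generalize R p = r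
  rw [eQ, eQ', eP, es]
  ring

theorem bijective_fderiv_id (h : ℝ × ℝ → ℝ × ℝ)
    (hh : HasFDerivAt h (ContinuousLinearMap.id ℝ (ℝ × ℝ)) 0) :
    Function.Bijective (⇑(fderiv ℝ h 0)) := by
  rw [hh.fderiv]; exact Function.bijective_id

/-- A map `(x, y + r)` with `r` of second order has identity derivative at the origin. -/
theorem hasFDerivAt_id_of (h : ℝ × ℝ → ℝ × ℝ) (r : ℝ × ℝ → ℝ) (hr : VanOrd 2 r)
    (hh : ∀ p, h p = (p.1, p.2 + r p)) :
    HasFDerivAt h (ContinuousLinearMap.id ℝ (ℝ × ℝ)) 0 := by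
  have hd : DifferentiableAt ℝ r 0 := (hr.1.differentiable (by simp)).differentiableAt
  have h1 : fderiv ℝ r 0 = 0 := by
    refine ContinuousLinearMap.ext fun v => ?_
    have h := DFunLike.congr_fun (hr.2 1 (by norm_num)) (fun _ => v)
    rw [iteratedFDeriv_one_apply] at h
    exact h
  have h2 : HasFDerivAt r 0 0 := h1 ▸ hd.hasFDerivAt
  have h3 := (hasFDerivAt_fst (𝕜 := ℝ) (p := (0 : ℝ × ℝ))).prodMk
    ((hasFDerivAt_snd (𝕜 := ℝ) (p := (0 : ℝ × ℝ))).add h2)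
  have : h = fun p => (p.1, p.2 + r p) := funext hh
  rw [this]
  rw [add_zero] at h3
  exact h3

theorem stmt10 (c d : ℝ) :
    JetEquiv 9 (fun p => (p.1, p.1 * p.2 ^ 2 + p.2 ^ 4 + c * p.2 ^ 8 + d * p.2 ^ 9))
      (fun p => (p.1, p.1 * p.2 ^ 2 + p.2 ^ 4 + d * p.2 ^ 9)) := by
  have hx : VanOrd 1 (fun p : ℝ × ℝ => p.1) := VanOrd.one_of contDiff_fst rfl
  have hy : VanOrd 1 (fun p : ℝ × ℝ => p.2) := VanOrd.one_of contDiff_snd rfl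
  have hc : ∀ r : ℝ, VanOrd 0 (fun _ => r) := fun r => VanOrd.of_smooth contDiff_const
  refine ⟨fun p => (p.1, p.2 + c / 2 * p.1 * p.2 ^ 3),
    fun p => (p.1, p.2 - c * p.2 ^ 2 + 7 * (c / 2) ^ 2 * p.2 ^ 3),
    by fun_prop, by fun_prop, by simp, by simp, ?_, ?_, ?_⟩
  · refine bijective_fderiv_id _ (hasFDerivAt_id_of _ (fun p => p.2 ^ 3 * (c / 2 * p.1)) ?_ ?_)
    · exact (hy.pow 3).mul (n := 0) (VanOrd.of_smooth (f := fun p : ℝ × ℝ => c / 2 * p.1)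
        (by fun_prop)) (by norm_num)
    · intro p; ext <;> simp; ring
  · refine bijective_fderiv_id _ (hasFDerivAt_id_of _
      (fun p => p.2 ^ 2 * (- c + 7 * (c / 2) ^ 2 * p.2)) ?_ ?_)
    · exact (hy.pow 2).mul (n := 0) (VanOrd.of_smooth
        (f := fun p : ℝ × ℝ => - c + 7 * (c / 2) ^ 2 * p.2) (by fun_prop)) (by norm_num)
    · intro p; ext <;> simp; ring
  · intro i hi
    have hrem := remainder_vanOrd _ _ _ _ hx hy (hc (c / 2)) (hc d)
    set E : ℝ × ℝ → ℝ := _ with hE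
    change VanOrd 10 E at hrem
    have hi' : ((i : ℕ) : WithTop ℕ∞) ≤ ((⊤ : ℕ∞) : WithTop ℕ∞) := by exact_mod_cast le_top
    have hEi : ContDiff ℝ i E := hrem.1.of_le hi'
    have hin : iteratedFDeriv ℝ i (⇑(ContinuousLinearMap.inr ℝ ℝ ℝ) ∘ E) 0 = 0 := by
      rw [ContinuousLinearMap.iteratedFDeriv_comp_left _ hEi.contDiffAt le_rfl,
        hrem.2 i (by omega)]
      ext <;> simp
    have hg : ContDiff ℝ i (fun p : ℝ × ℝ => (p.1, p.1 * p.2 ^ 2 + p.2 ^ 4 + d * p.2 ^ 9)) := by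
      fun_prop
    have hsum := iteratedFDeriv_add_apply (x := (0 : ℝ × ℝ)) hg.contDiffAt
      (((ContinuousLinearMap.inr ℝ ℝ ℝ).contDiff.comp hEi).contDiffAt)
    rw [hin, add_zero] at hsum
    rw [← hsum]
    congr 1
    funext p
    ext
    · simp
    · simp [hE]
      ring
end
end
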